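/- arXiv:2006.16565 — 2 statements merged into one kernel-verified Lean document; each statement's English description precedes it below -/
import Mathlib

section
/- There is an absolute constant c > 0 with the following property. Let Γ ≤ SL(2,ℝ) be a subgroup, let P₁, P₂ ⊆ ℍ² be finite sets such that d_Γ(p,q) ≠ 0 for all distinct p, q ∈ P₁ ∪ P₂, and let Γ₀ ⊆ Γ be a finite subset of cardinality K ≥ 1 which is a geodesic cover for P₁ ∪ P₂. Then, with n = |P₁ ∪ P₂| ≥ 2, the number of distinct cross distances satisfies |{d_Γ(p₁,p₂) : p₁ ∈ P₁, p₂ ∈ P₂}| ≥ (c / (K³)) · |P₁|² · |P₂|² / (n³ · log(K·n)). -/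
open scoped UpperHalfPlane MatrixGroups

noncomputable section

instance : DecidableEq ℍ := Classical.decEq _

/-- The quotient pseudo-distance `d_Γ(p,q) = inf_{γ ∈ Γ} d(p, γ·q)` associated to a
subgroup `Γ ≤ SL(2,ℝ)` acting on the hyperbolic plane. -/
def quotDist (Γ : Subgroup SL(2, ℝ)) (p q : ℍ) : ℝ :=
  ⨅ γ : Γ, dist p ((γ : SL(2, ℝ)) • q)

/-!
Since `d_Γ(p₁, p₂) = d(p₁, γ·p₂)` for some `γ ∈ Γ₀`, and distinct points of `P₂` lie in distinct
`Γ`-orbits, the pairs in `P₁ × P₂` lift injectively to pairs of points of `P = P₁ ∪ P₂ ∪ Γ₀·P₂` at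
the same distance. By Cauchy–Schwarz it then suffices that a set `P` of `N` points has
`O(N³ log N)` quadruples with `d(a, a') = d(b, b')`. As `ℍ` is two-point homogeneous, such a
quadruple with `a ≠ a'` comes from a unique isometry `g` with `g·a = b` and `g·a' = b'`, so these
quadruples number at most `∑ |P ∩ g⁻¹P|²`, and it is enough that `O(N³/k²)` isometries satisfy
`|P ∩ g⁻¹P| ≥ k`.

For bounded `k` this is an incidence bound for the lines `{g | g·a = b}` in the space of matrices.
If every line of a family met many others, a form of low degree would vanish on all of them: taking
the lines in random order, the zeros forced at crossings with earlier lines leave few conditions to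
impose. But over `ℂ` each line meets the quadric `det = 0`, which is `ℙ¹ × ℙ¹`, at the point
`(conj a, b)`, and a form stripped of its powers of `det` restricts to a nonzero polynomial of low
bidegree there, which has few zeros on a grid.

For large `k`, cut the plane into quadtree cells, few compared to `k`, with `O(N/k)` points each.
The cells are thick, and so are their images under a Möbius map `g`; by packing, the number of pairs
of a cell and an image of a cell that meet is at most a constant times the number of cells. So most
of the `k` points of `P ∩ g⁻¹P` share their pair of cells with another one, and the incidence bound
applies inside each pair of cells.
-/

open Finset

/-! ### Random orderings -/

section RandomOrder

theorem two_mul_sum_range_tsub_le (m n : ℕ) : 2 * ∑ j ∈ range n, (m - j) ≤ m * (m + 1) := by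
  induction m generalizing n with
  | zero => simp
  | succ m ih =>
    cases n with
    | zero => simp
    | succ n =>
      have shift : ∑ j ∈ range (n + 1), (m + 1 - j) = ∑ j ∈ range n, (m - j) + (m + 1) := by
        simp [sum_range_succ']
      linarith [ih n]

theorem sum_card_filter_lt_eq_sum_range {E β M : Type*} [LinearOrder β] [AddCommMonoid M]
    {σ : E → β} (hσ : Function.Injective σ) (F : ℕ → M) (T : Finset E) :
    ∑ x ∈ T, F #{y ∈ T | σ y < σ x} = ∑ j ∈ range #T, F j := by
  classical
  induction T using Finset.induction_on_max_value σ with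
  | empty => simp
  | insert a s ha hmax ih =>
    have hlt : ∀ x ∈ s, σ x < σ a := fun x hx ↦
      (hmax x hx).lt_of_ne fun h ↦ ha (hσ h ▸ hx)
    rw [sum_insert ha, card_insert_of_notMem ha, sum_range_succ, add_comm]
    congr 1
    · rw [← ih]
      refine sum_congr rfl fun x hx ↦ ?_
      rw [filter_insert, if_neg (hmax x hx).not_gt]
    · rw [filter_insert, if_neg (lt_irrefl _), filter_true_of_mem hlt]

variable {E : Type*} [Fintype E]

theorem sum_equiv_fin_card_filter_lt_eq [DecidableEq E] {M : Type*} [AddCommMonoid M]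
    {T : Finset E} {x e : E} (hx : x ∈ T) (he : e ∈ T) (F : ℕ → M) :
    ∑ σ : E ≃ Fin (Fintype.card E), F #{y ∈ T | σ y < σ x} =
      ∑ σ : E ≃ Fin (Fintype.card E), F #{y ∈ T | σ y < σ e} := by
  refine Fintype.sum_equiv ((Equiv.swap e x).equivCongr (Equiv.refl _)) _ _ fun σ ↦ ?_
  have swap_mem : ∀ y, Equiv.swap e x y ∈ T ↔ y ∈ T := fun y ↦ by
    rw [Equiv.swap_apply_def]; split_ifs <;> simp_all
  congr 1
  refine card_equiv (Equiv.swap e x) fun y ↦ ?_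
  simp [Equiv.equivCongr, swap_mem]

theorem card_mul_sum_equiv_fin_card_filter_lt [DecidableEq E] {T : Finset E} {e : E} (he : e ∈ T)
    (F : ℕ → ℕ) :
    #T * ∑ σ : E ≃ Fin (Fintype.card E), F #{y ∈ T | σ y < σ e} =
      Fintype.card (E ≃ Fin (Fintype.card E)) * ∑ j ∈ range #T, F j := by
  calc #T * ∑ σ : E ≃ Fin (Fintype.card E), F #{y ∈ T | σ y < σ e}
      = ∑ x ∈ T, ∑ σ : E ≃ Fin (Fintype.card E), F #{y ∈ T | σ y < σ x} := by
        rw [sum_congr rfl fun x hx ↦ sum_equiv_fin_card_filter_lt_eq hx he F, sum_const,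
          smul_eq_mul]
    _ = ∑ σ : E ≃ Fin (Fintype.card E), ∑ x ∈ T, F #{y ∈ T | σ y < σ x} := sum_comm
    _ = _ := by
        simp only [sum_card_filter_lt_eq_sum_range (Equiv.injective _), sum_const, card_univ,
          smul_eq_mul]

theorem exists_equiv_fin_sum_tsub_card_filter_lt_le (T : E → Finset E) {k : ℕ} (m : ℕ)
    (mem : ∀ e, e ∈ T e) (card_eq : ∀ e, #(T e) = k) :
    ∃ σ : E ≃ Fin (Fintype.card E),
      2 * k * ∑ e, (m - #{y ∈ T e | σ y < σ e}) ≤ Fintype.card E * (m * (m + 1)) := by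
  classical
  have average (e : E) :
      2 * k * ∑ σ : E ≃ Fin (Fintype.card E), (m - #{y ∈ T e | σ y < σ e}) ≤
        Fintype.card (E ≃ Fin (Fintype.card E)) * (m * (m + 1)) := by
    rw [mul_assoc, ← card_eq e, card_mul_sum_equiv_fin_card_filter_lt (mem e) (m - ·),
      mul_left_comm]
    exact Nat.mul_le_mul_left _ (two_mul_sum_range_tsub_le _ _)
  have total : ∑ σ : E ≃ Fin (Fintype.card E), 2 * k * ∑ e, (m - #{y ∈ T e | σ y < σ e}) ≤
      ∑ σ : E ≃ Fin (Fintype.card E), Fintype.card E * (m * (m + 1)) := by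
    rw [← mul_sum, sum_comm, mul_sum]
    refine (sum_le_sum fun e _ ↦ average e).trans_eq ?_
    simp only [sum_const, card_univ, smul_eq_mul]
    ring
  obtain ⟨σ, -, hσ⟩ := exists_le_of_sum_le ⟨Fintype.equivFin E, mem_univ _⟩ total
  exact ⟨σ, hσ⟩

end RandomOrder

/-! ### The polynomial method on `SL₂` -/

section Grid

open Polynomial
open scoped Polynomial.Bivariate

theorem card_le_of_evalEval_eq_zero {R : Type*} [CommRing R] [IsDomain R] {p : R[X][Y]}
    (hp : p ≠ 0) {A B : Finset R} {E : Finset (R × R)} (hE : E ⊆ A ×ˢ B)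
    (h0 : ∀ e ∈ E, p.evalEval e.1 e.2 = 0) :
    #E ≤ p.leadingCoeff.natDegree * #B + #A * p.natDegree := by
  classical
  let bad : Finset R := {a ∈ A | p.leadingCoeff.eval a = 0}
  have bad_card : #bad ≤ p.leadingCoeff.natDegree := by
    refine card_le_degree_of_subset_roots fun a ha ↦ ?_
    rw [mem_roots (leadingCoeff_ne_zero.mpr hp)]
    exact (mem_filter.mp ha).2
  have fiber_card : ∀ a ∈ A \ bad, #{e ∈ E | e.1 = a} ≤ p.natDegree := by
    intro a ha
    have ha0 : p.leadingCoeff.eval a ≠ 0 := fun h ↦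
      (mem_sdiff.mp ha).2 (mem_filter.mpr ⟨(mem_sdiff.mp ha).1, h⟩)
    have hpa : p.map (evalRingHom a) ≠ 0 := fun h ↦ ha0 <| by
      simpa using congrArg (coeff · p.natDegree) h
    have inj : Set.InjOn Prod.snd (SetLike.coe {e ∈ E | e.1 = a}) := fun x hx y hy hxy ↦
      Prod.ext ((mem_filter.mp hx).2.trans (mem_filter.mp hy).2.symm) hxy
    rw [← card_image_of_injOn inj]
    refine (card_le_degree_of_subset_roots fun b hb ↦ ?_).trans
      (natDegree_map_le (f := evalRingHom a))
    obtain ⟨e, he, rfl⟩ := Finset.mem_image.mp (mem_val.mp hb)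
    obtain ⟨heE, rfl⟩ := mem_filter.mp he
    rw [mem_roots hpa, IsRoot, eval_map, eval₂_evalRingHom]
    exact h0 e heE
  have cover : E ⊆ bad ×ˢ B ∪ (A \ bad).biUnion fun a ↦ {e ∈ E | e.1 = a} := by
    intro e he
    obtain ⟨hA, hB⟩ := mem_product.mp (hE he)
    by_cases hb : e.1 ∈ bad <;> simp [*]
  calc #E ≤ #(bad ×ˢ B) + #((A \ bad).biUnion fun a ↦ {e ∈ E | e.1 = a}) :=
        (card_le_card cover).trans (card_union_le _ _)
    _ ≤ p.leadingCoeff.natDegree * #B + #A * p.natDegree := by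
        refine add_le_add ?_ ((card_biUnion_le_card_mul _ _ _ fiber_card).trans ?_)
        · rw [card_product]; gcongr
        · gcongr; exact sdiff_subset

end Grid

section Forms

open Polynomial
open scoped Polynomial.Bivariate

/-- A basis index for the forms of degree `t` on `2 × 2` matrices: `⟨l, i, j⟩` stands for the
product of the `l`-th power of the determinant with a form of degree `t - 2 * l` that restricts to
the bidegree `(i, j)` monomial on the matrices of rank one. -/
abbrev FormIndex (t : ℕ) : Type := Σ l : Fin (t / 2 + 1), Fin (t - 2 * l + 1) × Fin (t - 2 * l + 1)

theorem six_mul_card_formIndex (t : ℕ) :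
    6 * Fintype.card (FormIndex t) = (t + 1) * (t + 2) * (t + 3) := by
  have card_eq (t : ℕ) : Fintype.card (FormIndex t) =
      ∑ l ∈ range (t / 2 + 1), (t - 2 * l + 1) * (t - 2 * l + 1) := by
    simp [FormIndex, sum_range]
  induction t using Nat.twoStepInduction with
  | zero => simp [card_eq]
  | one => simp [card_eq]
  | more t ih _ =>
    have shift (l : ℕ) : t + 2 - 2 * (l + 1) = t - 2 * l := by lia
    rw [card_eq, show (t + 2) / 2 + 1 = t / 2 + 1 + 1 by lia, sum_range_succ']
    simp only [shift]
    rw [← card_eq, mul_add, ih, mul_zero, tsub_zero]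
    ring

section CommRing

variable {R : Type*} [CommRing R]

/-- The standard monomial of degree `d` in the four entries `p, q, r, s` that takes the value
`x ^ i * y ^ j` at the Segre point `(y, x * y, 1, x)`. -/
def segreMonomial (p q r s : R) (d i j : ℕ) : R :=
  q ^ min i j * p ^ (j - min i j) * s ^ (i - min i j) * r ^ (d - max i j)

theorem segreMonomial_segre (x y : R) (d i j : ℕ) :
    segreMonomial y (x * y) 1 x d i j = x ^ i * y ^ j := by
  have hi : x ^ i = x ^ min i j * x ^ (i - min i j) := by rw [← pow_add]; congr 1; lia
  have hj : y ^ j = y ^ min i j * y ^ (j - min i j) := by rw [← pow_add]; congr 1; lia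
  rw [segreMonomial, hi, hj]
  ring

/-- The basis form of degree `t` with index `x`, evaluated at a matrix. The entries are listed so
that the determinant is `q * r - p * s`, the matrix being `!![p, -q; r, -s]`. -/
def basisForm {t : ℕ} (p q r s : R) (x : FormIndex t) : R :=
  (q * r - p * s) ^ (x.1 : ℕ) * segreMonomial p q r s (t - 2 * x.1) x.2.1 x.2.2

theorem basisForm_mul {t : ℕ} (u p q r s : R) (x : FormIndex t) :
    basisForm (u * p) (u * q) (u * r) (u * s) x = u ^ t * basisForm p q r s x := by
  obtain ⟨l, i, j⟩ := x
  have hu : u ^ t = (u * u) ^ (l : ℕ) * (u ^ min (i : ℕ) j * u ^ ((j : ℕ) - min (i : ℕ) j) *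
      u ^ ((i : ℕ) - min (i : ℕ) j) * u ^ (t - 2 * l - max (i : ℕ) j)) := by
    rw [← sq, ← pow_mul, ← pow_add, ← pow_add, ← pow_add, ← pow_add]
    congr 1
    lia
  rw [basisForm, basisForm, segreMonomial, segreMonomial, hu,
    show u * q * (u * r) - u * p * (u * s) = u * u * (q * r - p * s) by ring]
  simp only [mul_pow]
  ring

variable {K : Type*} [CommRing K] [Algebra K R] {t : ℕ}

/-- The form of degree `t` with given coefficients in the basis `basisForm`, evaluated at a matrix,
as a linear function of the coefficients. -/
def formEval (t : ℕ) (p q r s : R) : (FormIndex t → K) →ₗ[K] R :=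
  Fintype.linearCombination K (basisForm p q r s)

theorem formEval_mul (u p q r s : R) (c : FormIndex t → K) :
    formEval t (u * p) (u * q) (u * r) (u * s) c = u ^ t * formEval t p q r s c := by
  simp only [formEval, Fintype.linearCombination_apply, basisForm_mul, mul_sum, mul_smul_comm]

theorem map_formEval {S : Type*} [CommRing S] [Algebra K S] (f : R →ₐ[K] S) (p q r s : R)
    (c : FormIndex t → K) :
    f (formEval t p q r s c) = formEval t (f p) (f q) (f r) (f s) c := by
  simp [formEval, Fintype.linearCombination_apply, basisForm, segreMonomial]

end CommRing

variable {K : Type*} [CommRing K] {t : ℕ}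

theorem natDegree_segreMonomial_le {p q r s : K[X]} (hp : p.natDegree ≤ 1) (hq : q.natDegree ≤ 1)
    (hr : r.natDegree ≤ 1) (hs : s.natDegree ≤ 1) {d i j : ℕ} (hi : i ≤ d) (hj : j ≤ d) :
    (segreMonomial p q r s d i j).natDegree ≤ d := by
  have pow_le {f : K[X]} (k : ℕ) (hf : f.natDegree ≤ 1) : (f ^ k).natDegree ≤ k := by
    simpa using natDegree_pow_le_of_le k hf
  refine (natDegree_mul_le_of_le (natDegree_mul_le_of_le (natDegree_mul_le_of_le
    (pow_le _ hq) (pow_le _ hp)) (pow_le _ hs)) (pow_le _ hr)).trans ?_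
  lia

theorem natDegree_formEval_le {p q r s : K[X]} (hp : p.natDegree ≤ 1) (hq : q.natDegree ≤ 1)
    (hr : r.natDegree ≤ 1) (hs : s.natDegree ≤ 1) (c : FormIndex t → K) :
    (formEval t p q r s c).natDegree ≤ t := by
  have det_le : (q * r - p * s).natDegree ≤ 2 := by
    simpa using natDegree_sub_le_of_le (natDegree_mul_le_of_le hq hr) (natDegree_mul_le_of_le hp hs)
  rw [formEval, Fintype.linearCombination_apply]
  refine natDegree_sum_le_of_forall_le _ _ fun ⟨l, i, j⟩ _ ↦ (natDegree_smul_le _ _).trans ?_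
  refine (natDegree_mul_le_of_le (natDegree_pow_le_of_le _ det_le)
    (natDegree_segreMonomial_le hp hq hr hs (by lia) (by lia))).trans ?_
  lia

/-- The restriction of a form of degree `t` to the line of matrices
`X • !![b', -a * b'; 1, -a] + !![b, -a' * b; 1, -a']` joining two matrices of rank one. -/
def linePoly (t : ℕ) (a a' b b' : K) : (FormIndex t → K) →ₗ[K] K[X] :=
  formEval t (C b' * X + C b) (C (a * b') * X + C (a' * b)) (C 1 * X + C 1) (C a * X + C a')

theorem natDegree_linePoly_le (a a' b b' : K) (c : FormIndex t → K) :
    (linePoly t a a' b b' c).natDegree ≤ t :=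
  natDegree_formEval_le natDegree_linear_le natDegree_linear_le natDegree_linear_le
    natDegree_linear_le c

theorem formEval_eq_pow_mul_eval_linePoly {u x a a' b b' p q r s : K} (hp : p = u * (b' * x + b))
    (hq : q = u * (a * b' * x + a' * b)) (hr : r = u * (x + 1)) (hs : s = u * (a * x + a'))
    (c : FormIndex t → K) :
    formEval t p q r s c = u ^ t * (linePoly t a a' b b' c).eval x := by
  have eval_line := map_formEval (aeval x : K[X] →ₐ[K] K) (C b' * X + C b)
    (C (a * b') * X + C (a' * b)) (C 1 * X + C 1) (C a * X + C a') c
  simp only [coe_aeval_eq_eval, eval_add, eval_mul, eval_C, eval_X, one_mul] at eval_line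
  rw [linePoly, eval_line, ← formEval_mul, hp, hq, hr, hs]

/-- The cofactor of the `l`-th power of the determinant in a form, restricted to the matrices of
rank one and written in the affine coordinates of their Segre parametrization. -/
def segrePoly (c : FormIndex t → K) (l : Fin (t / 2 + 1)) : K[X][Y] :=
  ∑ y, monomial (y.2 : ℕ) (monomial (y.1 : ℕ) (c ⟨l, y⟩))

theorem evalEval_segrePoly (c : FormIndex t → K) (l : Fin (t / 2 + 1)) (x y : K) :
    (segrePoly c l).evalEval x y =
      ∑ z : Fin (t - 2 * l + 1) × Fin (t - 2 * l + 1),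
        c ⟨l, z⟩ * (x ^ (z.1 : ℕ) * y ^ (z.2 : ℕ)) := by
  simp [segrePoly, evalEval, eval_finsetSum, eval_monomial, mul_assoc]

theorem coeff_coeff_segrePoly (c : FormIndex t → K) (l : Fin (t / 2 + 1))
    (y : Fin (t - 2 * l + 1) × Fin (t - 2 * l + 1)) :
    ((segrePoly c l).coeff y.2).coeff y.1 = c ⟨l, y⟩ := by
  rw [segrePoly, finsetSum_coeff, finsetSum_coeff, sum_eq_single y _ (by simp)]
  · simp
  · intro z _ hz
    rw [coeff_monomial]
    split_ifs with h
    · exact coeff_monomial_of_ne _ fun h' ↦ hz (Prod.ext (Fin.ext h'.symm) (Fin.ext h))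
    · simp

theorem natDegree_segrePoly_le (c : FormIndex t → K) (l : Fin (t / 2 + 1)) :
    (segrePoly c l).natDegree ≤ t :=
  natDegree_sum_le_of_forall_le _ _ fun _ _ ↦ (natDegree_monomial_le _).trans (by lia)

theorem natDegree_leadingCoeff_segrePoly_le (c : FormIndex t → K) (l : Fin (t / 2 + 1)) :
    (segrePoly c l).leadingCoeff.natDegree ≤ t := by
  rw [leadingCoeff, segrePoly, finsetSum_coeff]
  refine natDegree_sum_le_of_forall_le _ _ fun y _ ↦ ?_
  rw [coeff_monomial]
  split_ifs
  · exact (natDegree_monomial_le _).trans (by lia)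
  · simp

theorem basisForm_line (a a' b b' : K) (x : FormIndex t) :
    basisForm (C b' * X + C b) (C (a * b') * X + C (a' * b)) (C 1 * X + C 1) (C a * X + C a') x =
      C (((a - a') * (b' - b)) ^ (x.1 : ℕ)) *
        segreMonomial (C b' * X + C b) (C (a * b') * X + C (a' * b)) (C 1 * X + C 1)
          (C a * X + C a') (t - 2 * x.1) x.2.1 x.2.2 * X ^ (x.1 : ℕ) := by
  rw [basisForm, show (C (a * b') * X + C (a' * b)) * (C 1 * X + C 1) -
    (C b' * X + C b) * (C a * X + C a') = C ((a - a') * (b' - b)) * X by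
      simp only [map_mul, map_sub, map_one]; ring, mul_pow, C_pow]
  ring

theorem coeff_linePoly_eq_mul_evalEval_segrePoly {c : FormIndex t → K} {l : Fin (t / 2 + 1)}
    (lowest : ∀ l' < l, ∀ y, c ⟨l', y⟩ = 0) (a a' b b' : K) :
    (linePoly t a a' b b' c).coeff l =
      ((a - a') * (b' - b)) ^ (l : ℕ) * (segrePoly c l).evalEval a' b := by
  rw [linePoly, formEval, Fintype.linearCombination_apply, finsetSum_coeff, Fintype.sum_sigma,
    sum_eq_single l _ (by simp), evalEval_segrePoly, mul_sum]
  · refine sum_congr rfl fun y _ ↦ ?_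
    rw [coeff_smul, basisForm_line, coeff_mul_X_pow', if_pos le_rfl, Nat.sub_self, coeff_C_mul,
      ← segreMonomial_segre a' b (t - 2 * l), coeff_zero_eq_eval_zero, smul_eq_mul, mul_left_comm]
    simp [segreMonomial]
  · intro l' _ hne
    refine sum_eq_zero fun y _ ↦ ?_
    rcases lt_or_gt_of_ne hne with hlt | hgt
    · rw [lowest l' hlt, zero_smul, coeff_zero]
    · rw [coeff_smul, basisForm_line, coeff_mul_X_pow', if_neg (by simpa using hgt), smul_zero]

theorem exists_evalEval_eq_zero_of_linePoly_eq_zero [IsDomain K] {c : FormIndex t → K}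
    (hc : c ≠ 0) :
    ∃ Q : K[X][Y], Q ≠ 0 ∧ Q.natDegree ≤ t ∧ Q.leadingCoeff.natDegree ≤ t ∧
      ∀ a a' b b' : K, a ≠ a' → b ≠ b' → linePoly t a a' b b' c = 0 → Q.evalEval a' b = 0 := by
  obtain ⟨l, ⟨y, hy⟩, hmin⟩ : ∃ l, (∃ y, c ⟨l, y⟩ ≠ 0) ∧ ∀ l' < l, ∀ y, c ⟨l', y⟩ = 0 := by
    obtain ⟨⟨l₀, y₀⟩, h₀⟩ := Function.ne_iff.mp hc
    obtain ⟨l, hl, hmin⟩ := exists_minimal_of_wellFoundedLT (fun l ↦ ∃ y, c ⟨l, y⟩ ≠ 0)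
      ⟨l₀, y₀, h₀⟩
    refine ⟨l, hl, fun l' hlt y ↦ ?_⟩
    by_contra hne
    exact hlt.not_ge (hmin ⟨y, hne⟩ hlt.le)
  refine ⟨segrePoly c l, fun h ↦ hy ?_, natDegree_segrePoly_le c l,
    natDegree_leadingCoeff_segrePoly_le c l, fun a a' b b' ha hb h ↦ ?_⟩
  · simpa [h] using (coeff_coeff_segrePoly c l y).symm
  · have hcoeff := coeff_linePoly_eq_mul_evalEval_segrePoly hmin a a' b b'
    rw [h, coeff_zero] at hcoeff
    exact (mul_eq_zero.mp hcoeff.symm).resolve_left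
      (pow_ne_zero _ (mul_ne_zero (sub_ne_zero.mpr ha) (sub_ne_zero.mpr hb.symm)))

end Forms

section PrescribedZeros

open Polynomial

variable {K V ι : Type*} [Field K] [Infinite K] [AddCommGroup V] [Module K V]
  [FiniteDimensional K V] [Fintype ι] {t : ℕ}

theorem exists_ne_zero_forall_eq_zero_of_sum_lt_finrank {κ : Type*} [Preorder κ] [WellFoundedLT κ]
    (σ : ι → κ) (Ψ : ι → V →ₗ[K] K[X]) (natDegree_le : ∀ e v, (Ψ e v).natDegree ≤ t)
    (Z : ι → Finset K)
    (vanish : ∀ e v, (∀ e', σ e' < σ e → Ψ e' v = 0) → ∀ x ∈ Z e, (Ψ e v).eval x = 0)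
    (sum_lt : ∑ e, (t + 1 - #(Z e)) < Module.finrank K V) :
    ∃ v ≠ 0, ∀ e, Ψ e v = 0 := by
  classical
  have extend (e : ι) : ∃ Z' : Finset K, Z e ⊆ Z' ∧ #Z' = max (t + 1) #(Z e) :=
    Infinite.exists_superset_card_eq _ _ (le_max_right _ _)
  choose Z' subset card_eq using extend
  let L : V →ₗ[K] (Σ e, {x // x ∈ Z' e \ Z e}) → K :=
    LinearMap.pi fun ex ↦ leval (ex.2 : K) ∘ₗ Ψ ex.1
  have ker_ne_bot : LinearMap.ker L ≠ ⊥ := by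
    refine LinearMap.ker_ne_bot_of_finrank_lt ?_
    convert sum_lt
    simp only [Module.finrank_fintype_fun_eq_card, Fintype.card_sigma, Fintype.card_coe]
    refine sum_congr rfl fun e _ ↦ ?_
    rw [card_sdiff_of_subset (subset e), card_eq]
    lia
  obtain ⟨v, hv, hv0⟩ := Submodule.exists_mem_ne_zero_of_ne_bot ker_ne_bot
  refine ⟨v, hv0, fun e ↦ ?_⟩
  induction e using (wellFounded_lt.onFun (f := σ)).induction with
  | _ e ih =>
    refine eq_zero_of_natDegree_lt_card_of_eval_eq_zero' _ (Z' e) (fun x hx ↦ ?_) ?_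
    · by_cases hxZ : x ∈ Z e
      · exact vanish e v ih x hxZ
      · exact congrFun hv ⟨e, x, mem_sdiff.mpr ⟨hx, hxZ⟩⟩
    · rw [card_eq]
      exact (natDegree_le e v).trans_lt (Nat.lt_succ_self t |>.trans_le (le_max_left _ _))

/-- In a random order of the lines, a line with `k` crossings meets an earlier line in `j` of them
with probability `1 / (k + 1)` for each `j ≤ k`, so it imposes few new conditions on average. -/
theorem exists_ne_zero_forall_eq_zero_of_crossings {γ : Type*} {k : ℕ}
    (Ψ : ι → V →ₗ[K] K[X]) (natDegree_le : ∀ e v, (Ψ e v).natDegree ≤ t)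
    (crossings : ι → Finset γ) (card_eq : ∀ e, #(crossings e) = k)
    (partner : ι → γ → ι) (partner_ne : ∀ e, ∀ g ∈ crossings e, partner e g ≠ e)
    (partner_injOn : ∀ e, Set.InjOn (partner e) (crossings e))
    (param : ι → γ → K) (param_injOn : ∀ e, Set.InjOn (param e) (crossings e))
    (vanish : ∀ e, ∀ g ∈ crossings e, ∀ v, Ψ (partner e g) v = 0 → (Ψ e v).eval (param e g) = 0)
    (card_lt : Fintype.card ι * ((t + 1) * (t + 2)) < 2 * (k + 1) * Module.finrank K V) :
    ∃ v ≠ 0, ∀ e, Ψ e v = 0 := by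
  classical
  have notMem (e : ι) : e ∉ (crossings e).image (partner e) := fun h ↦ by
    obtain ⟨g, hg, heq⟩ := Finset.mem_image.mp h
    exact partner_ne e g hg heq
  obtain ⟨σ, hσ⟩ := exists_equiv_fin_sum_tsub_card_filter_lt_le
    (fun e ↦ insert e ((crossings e).image (partner e))) (k := k + 1) (t + 1)
    (fun e ↦ mem_insert_self _ _) fun e ↦ by
      rw [card_insert_of_notMem (notMem e), card_image_of_injOn (partner_injOn e), card_eq]
  let earlier (e : ι) : Finset γ := {g ∈ crossings e | σ (partner e g) < σ e}
  have earlier_subset (e : ι) : (earlier e : Set γ) ⊆ crossings e :=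
    coe_subset.mpr (filter_subset _ _)
  refine exists_ne_zero_forall_eq_zero_of_sum_lt_finrank σ Ψ natDegree_le
    (fun e ↦ (earlier e).image (param e)) (fun e v ih x hx ↦ ?_) ?_
  · obtain ⟨g, hg, rfl⟩ := Finset.mem_image.mp hx
    obtain ⟨hgc, hlt⟩ := mem_filter.mp hg
    exact vanish e g hgc v (ih _ hlt)
  · have card_earlier (e : ι) :
        #{y ∈ insert e ((crossings e).image (partner e)) | σ y < σ e} = #(earlier e) := by
      rw [filter_insert, if_neg (lt_irrefl _), filter_image,
        card_image_of_injOn ((partner_injOn e).mono (earlier_subset e))]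
    simp only [card_earlier] at hσ
    simp only [card_image_of_injOn ((param_injOn _).mono (earlier_subset _))]
    exact Nat.lt_of_mul_lt_mul_left (hσ.trans_lt card_lt)

end PrescribedZeros

section SpecialLinear

open UpperHalfPlane ComplexConjugate

theorem coe_smul_mul_denom (g : SL(2, ℝ)) (a : ℍ) :
    ((g • a : ℍ) : ℂ) * (g 1 0 * a + g 1 1) = g 0 0 * a + g 0 1 := by
  rw [coe_specialLinearGroup_apply]
  exact div_mul_cancel₀ _ (denom_ne_zero g a)

theorem smul_eq_smul_of_smul_eq_smul_of_ne {g g' : SL(2, ℝ)} {a a' : ℍ} (hne : a ≠ a')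
    (h : g • a = g' • a) (h' : g • a' = g' • a') (z : ℍ) : g • z = g' • z := by
  rw [← inv_smul_eq_iff, ← mul_smul] at h h' ⊢
  set k : GL (Fin 2) ℝ := ↑(g'⁻¹ * g) with hk
  have det_pos : 0 < k.val.det := by simp [hk]
  change k • a = a at h
  change k • a' = a' at h'
  change k • z = z
  by_contra hz
  have hcenter : k ∉ Subgroup.center _ := fun hc ↦
    hz (forall_smul_eq_self_iff_mem_center.mpr hc z)
  have hell := isElliptic_of_exists_smul_eq_self det_pos hcenter ⟨a, h⟩
  rw [gl_smul_eq_self_iff_eq_fixedPt det_pos hell] at h h'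
  exact hne (h.trans h'.symm)

theorem smul_eq_smul_of_apply_eq_mul {g g' : SL(2, ℝ)} {ρ : ℂ} (hρ : ρ ≠ 0)
    (h : ∀ i j, (g' i j : ℂ) = ρ * g i j) (z : ℍ) : g • z = g' • z := by
  apply UpperHalfPlane.ext
  simp only [coe_specialLinearGroup_apply, Algebra.algebraMap_self, RingHom.id_apply, h, mul_assoc,
    ← mul_add, mul_div_mul_left _ _ hρ]

theorem sub_conj_ne_zero (a : ℍ) : (a : ℂ) - conj (a : ℂ) ≠ 0 := by
  simp [Complex.sub_conj, a.im_ne_zero]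

/-- The parameter of `g` on the line of matrices carrying `a` to `g • a`, in the parametrization
used by `linePoly` with `a' = conj a`, `b = g • a` and `b' = conj (g • a)`. -/
def lineParam (g : SL(2, ℝ)) (a : ℍ) : ℂ := -conj (denom g a) / denom g a

/-- The factor between `g` and the matrix with parameter `lineParam g a` on the line of matrices
carrying `a` to `g • a`. -/
def lineScale (g : SL(2, ℝ)) (a : ℍ) : ℂ := denom g a / (a - conj (a : ℂ))

theorem lineScale_ne_zero (g : SL(2, ℝ)) (a : ℍ) : lineScale g a ≠ 0 :=
  div_ne_zero (denom_ne_zero g a) (sub_conj_ne_zero a)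

theorem apply_eq_lineScale_mul {g : SL(2, ℝ)} {a b : ℍ} (h : g • a = b) :
    (g 0 0 : ℂ) = lineScale g a * (conj (b : ℂ) * lineParam g a + b) ∧
    (-g 0 1 : ℂ) = lineScale g a * (a * conj (b : ℂ) * lineParam g a + conj (a : ℂ) * b) ∧
    (g 1 0 : ℂ) = lineScale g a * (lineParam g a + 1) ∧
    (-g 1 1 : ℂ) = lineScale g a * (a * lineParam g a + conj (a : ℂ)) := by
  have action : (b : ℂ) * (g 1 0 * a + g 1 1) = g 0 0 * a + g 0 1 := h ▸ coe_smul_mul_denom g a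
  have action_conj := congrArg conj action
  have denom_ne : (g 1 0 : ℂ) * a + g 1 1 ≠ 0 := denom_ne_zero g a
  have sub_ne := sub_conj_ne_zero a
  have denom_eq : denom g a = (g 1 0 : ℂ) * a + g 1 1 := rfl
  simp only [map_mul, map_add, Complex.conj_ofReal] at action_conj
  simp only [lineScale, lineParam, denom_eq, map_mul, map_add, Complex.conj_ofReal]
  refine ⟨?_, ?_, ?_, ?_⟩ <;> field_simp
  · linear_combination action_conj - action
  · linear_combination a * action_conj - conj (a : ℂ) * action
  all_goals ring

theorem smul_eq_smul_of_lineParam_eq {g g' : SL(2, ℝ)} {a b : ℍ} (h : g • a = b)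
    (h' : g' • a = b) (hx : lineParam g a = lineParam g' a) (z : ℍ) : g • z = g' • z := by
  obtain ⟨g00, g01, g10, g11⟩ := apply_eq_lineScale_mul h
  obtain ⟨g00', g01', g10', g11'⟩ := apply_eq_lineScale_mul h'
  rw [← hx] at g00' g01' g10' g11'
  have scale_ne := lineScale_ne_zero g a
  refine smul_eq_smul_of_apply_eq_mul (div_ne_zero (lineScale_ne_zero g' a) scale_ne) ?_ z
  rw [neg_eq_iff_eq_neg] at g01 g01' g11 g11'
  simp only [Fin.forall_fin_two, g00, g01, g10, g11, g00', g01', g10', g11']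
  refine ⟨⟨?_, ?_⟩, ?_, ?_⟩ <;> field_simp

/-- The restriction of a form of degree `t` to the line of matrices carrying `e.1` to `e.2`. -/
def transporterPoly (t : ℕ) (e : ℍ × ℍ) : (FormIndex t → ℂ) →ₗ[ℂ] Polynomial ℂ :=
  linePoly t (e.1 : ℂ) (conj (e.1 : ℂ)) e.2 (conj (e.2 : ℂ))

theorem formEval_eq_lineScale_pow_mul {t : ℕ} {g : SL(2, ℝ)} {e : ℍ × ℍ} (h : g • e.1 = e.2)
    (c : FormIndex t → ℂ) :
    formEval t (g 0 0 : ℂ) (-g 0 1) (g 1 0) (-g 1 1) c =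
      lineScale g e.1 ^ t * (transporterPoly t e c).eval (lineParam g e.1) := by
  obtain ⟨g00, g01, g10, g11⟩ := apply_eq_lineScale_mul h
  exact formEval_eq_pow_mul_eval_linePoly g00 g01 g10 g11 c

theorem eval_transporterPoly_eq_zero {t : ℕ} {g : SL(2, ℝ)} {e e' : ℍ × ℍ} (h : g • e.1 = e.2)
    (h' : g • e'.1 = e'.2) {c : FormIndex t → ℂ} (hc : transporterPoly t e' c = 0) :
    (transporterPoly t e c).eval (lineParam g e.1) = 0 := by
  have hform := formEval_eq_lineScale_pow_mul h' c
  rw [hc, Polynomial.eval_zero, mul_zero, formEval_eq_lineScale_pow_mul h] at hform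
  exact (mul_eq_zero.mp hform).resolve_left (pow_ne_zero _ (lineScale_ne_zero g e.1))

theorem card_le_of_transporterPoly_eq_zero {t : ℕ} {c : FormIndex t → ℂ} (hc : c ≠ 0)
    {A B : Finset ℍ} {E : Finset (ℍ × ℍ)} (hE : E ⊆ A ×ˢ B)
    (h0 : ∀ e ∈ E, transporterPoly t e c = 0) : #E ≤ t * (#A + #B) := by
  classical
  obtain ⟨Q, hQ, hdeg, hlead, hvanish⟩ := exists_evalEval_eq_zero_of_linePoly_eq_zero hc
  let coord (e : ℍ × ℍ) : ℂ × ℂ := (conj (e.1 : ℂ), e.2)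
  have coord_injective : Function.Injective coord := fun e e' h ↦ Prod.ext
    (UpperHalfPlane.ext ((starRingEnd ℂ).injective (congrArg Prod.fst h)))
    (UpperHalfPlane.ext (congrArg Prod.snd h))
  have subset : E.image coord ⊆
      A.image (fun a : ℍ ↦ conj (a : ℂ)) ×ˢ B.image (fun b : ℍ ↦ (b : ℂ)) := by
    refine image_subset_iff.mpr fun e he ↦ ?_
    obtain ⟨hA, hB⟩ := mem_product.mp (hE he)
    exact mem_product.mpr ⟨mem_image_of_mem _ hA, mem_image_of_mem _ hB⟩
  have zeros : ∀ x ∈ E.image coord, Q.evalEval x.1 x.2 = 0 := by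
    intro x hx
    obtain ⟨e, he, rfl⟩ := mem_image.mp hx
    exact hvanish _ _ _ _ (sub_ne_zero.mp (sub_conj_ne_zero e.1))
      (sub_ne_zero.mp (sub_conj_ne_zero e.2)) (h0 e he)
  calc #E = #(E.image coord) := (card_image_of_injective _ coord_injective).symm
    _ ≤ _ := card_le_of_evalEval_eq_zero hQ subset zeros
    _ ≤ t * #B + #A * t := by gcongr <;> exact card_image_le
    _ = t * (#A + #B) := by ring

end SpecialLinear

section MultiplePoints

variable {α β : Type*} (I : α → β → Prop)

open Classical in
/-- For an incidence relation `I` between points and lines, the points of `G` that lie on the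
line `e` and on another line of `E`. -/
def multiplePoints (G : Finset α) (E : Finset β) (e : β) : Finset α :=
  {g ∈ G | I g e ∧ ∃ e' ∈ E, e' ≠ e ∧ I g e'}

variable {I}

theorem mem_multiplePoints {G : Finset α} {E : Finset β} {e : β} {g : α} :
    g ∈ multiplePoints I G E e ↔ g ∈ G ∧ I g e ∧ ∃ e' ∈ E, e' ≠ e ∧ I g e' := by
  classical
  exact mem_filter

theorem sum_card_multiplePoints_le_add_sum_erase [DecidableEq β] (G : Finset α) {E : Finset β}
    {e : β} (he : e ∈ E) :
    ∑ e' ∈ E, #(multiplePoints I G E e') ≤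
      2 * #(multiplePoints I G E e) + ∑ e' ∈ E.erase e, #(multiplePoints I G (E.erase e) e') := by
  classical
  let lost (e' : β) : Finset α :=
    {g ∈ multiplePoints I G E e | I g e' ∧ ∀ e₂ ∈ E.erase e, I g e₂ → e₂ = e'}
  have card_le : ∀ e' ∈ E.erase e,
      #(multiplePoints I G E e') ≤ #(multiplePoints I G (E.erase e) e') + #(lost e') := by
    intro e' he'
    refine (card_le_card fun g hg ↦ ?_).trans (card_union_le _ _)
    obtain ⟨hgG, hge', e₂, he₂, hne, hge₂⟩ := mem_multiplePoints.mp hg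
    rw [mem_union]
    by_cases only : ∀ e₂ ∈ E.erase e, I g e₂ → e₂ = e'
    · have : e₂ = e := by_contra fun h ↦ hne (only e₂ (mem_erase.mpr ⟨h, he₂⟩) hge₂)
      have mem_e := mem_multiplePoints.mpr
        ⟨hgG, this ▸ hge₂, e', mem_of_mem_erase he', ne_of_mem_erase he', hge'⟩
      exact .inr (mem_filter.mpr ⟨mem_e, hge', only⟩)
    · push Not at only
      obtain ⟨e₃, he₃, hge₃, hne₃⟩ := only
      exact .inl (mem_multiplePoints.mpr ⟨hgG, hge', e₃, he₃, hne₃, hge₃⟩)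
  have lost_disjoint : ((E.erase e : Finset β) : Set β).PairwiseDisjoint lost := by
    intro x hx y _ hxy
    refine disjoint_left.mpr fun g hgx hgy ↦ hxy ?_
    exact (mem_filter.mp hgy).2.2 x hx (mem_filter.mp hgx).2.1
  have sum_lost : ∑ e' ∈ E.erase e, #(lost e') ≤ #(multiplePoints I G E e) := by
    rw [← card_biUnion lost_disjoint]
    exact card_le_card (biUnion_subset.mpr fun _ _ ↦ filter_subset _ _)
  have sum_le := sum_le_sum card_le
  rw [sum_add_distrib] at sum_le
  rw [← add_sum_erase E _ he]
  lia

theorem sum_card_multiplePoints_le {G : Finset α} {E : Finset β} {m : ℕ}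
    (h : ∀ E' ⊆ E, E'.Nonempty → ∃ e ∈ E', #(multiplePoints I G E' e) ≤ m) :
    ∑ e ∈ E, #(multiplePoints I G E e) ≤ 2 * m * #E := by
  classical
  induction E using Finset.strongInduction with
  | H E ih =>
    rcases E.eq_empty_or_nonempty with rfl | hne
    · simp
    obtain ⟨e, he, hle⟩ := h E subset_rfl hne
    have erase_le := ih (E.erase e) (erase_ssubset he) fun E' hE' ↦
      h E' (hE'.trans (erase_subset _ _))
    have step := sum_card_multiplePoints_le_add_sum_erase (I := I) G he
    rw [← card_erase_add_one he, mul_add]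
    lia

end MultiplePoints

section TransporterLines

/-- The matrix `g` lies on the line of matrices carrying `e.1` to `e.2`. -/
def Carries (g : SL(2, ℝ)) (e : ℍ × ℍ) : Prop := g • e.1 = e.2

theorem injOn_of_carries {R : Set SL(2, ℝ)} (hR : Set.InjOn (MulAction.toPerm (β := ℍ)) R)
    {e : ℍ × ℍ} (carries : ∀ g ∈ R, Carries g e) {partner : SL(2, ℝ) → ℍ × ℍ}
    (partner_ne : ∀ g ∈ R, partner g ≠ e) (carries_partner : ∀ g ∈ R, Carries g (partner g)) :
    Set.InjOn partner R := by
  intro g hg g' hg' heq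
  have hne : e.1 ≠ (partner g).1 := fun h ↦ partner_ne g hg <| Prod.ext h.symm <| by
    rw [← carries_partner g hg, ← carries g hg, h]
  have agree := smul_eq_smul_of_smul_eq_smul_of_ne hne
    ((carries g hg).trans (carries g' hg').symm)
    ((carries_partner g hg).trans (heq ▸ (carries_partner g' hg').symm))
  exact hR hg hg' (Equiv.ext agree)

theorem mul_lt_card_formIndex {m n t : ℕ} (h : m ≤ t * n + n) :
    m * ((t + 1) * (t + 2)) < 2 * (3 * n + 1) * Fintype.card (FormIndex t) := by
  refine Nat.lt_of_mul_lt_mul_left (a := 3) ?_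
  have hcard := six_mul_card_formIndex t
  have hlt : 3 * m < (3 * n + 1) * (t + 3) := by nlinarith
  calc 3 * (m * ((t + 1) * (t + 2))) = 3 * m * ((t + 1) * (t + 2)) := by ring
    _ < (3 * n + 1) * (t + 3) * ((t + 1) * (t + 2)) := by gcongr
    _ = (3 * n + 1) * (6 * Fintype.card (FormIndex t)) := by rw [hcard]; ring
    _ = 3 * (2 * (3 * n + 1) * Fintype.card (FormIndex t)) := by ring

variable {G : Finset SL(2, ℝ)} {A B : Finset ℍ} {E : Finset (ℍ × ℍ)}

theorem exists_form_ne_zero_forall_transporterPoly_eq_zero {n t : ℕ}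
    (hG : Set.InjOn (MulAction.toPerm (β := ℍ)) (G : Set SL(2, ℝ)))
    (rich : ∀ e ∈ E, 3 * n < #(multiplePoints Carries G E e)) (hE : #E ≤ t * n + n) :
    ∃ c : FormIndex t → ℂ, c ≠ 0 ∧ ∀ e ∈ E, transporterPoly t e c = 0 := by
  have exists_subset (e : E) : ∃ R ⊆ multiplePoints Carries G E e, #R = 3 * n :=
    exists_subset_card_eq (rich e e.2).le
  choose R hR card_eq using exists_subset
  have mem (e : E) (g) (hg : g ∈ R e) :
      g ∈ G ∧ Carries g e ∧ ∃ e' ∈ E, e' ≠ e ∧ Carries g e' := mem_multiplePoints.mp (hR e hg)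
  have exists_partner (e : E) (g) : ∃ e' : E, g ∈ R e → e' ≠ e ∧ Carries g e' := by
    by_cases hg : g ∈ R e
    · obtain ⟨-, -, e', he', hne, hc⟩ := mem e g hg
      exact ⟨⟨e', he'⟩, fun _ ↦ ⟨fun h ↦ hne (congrArg Subtype.val h), hc⟩⟩
    · exact ⟨e, fun h ↦ absurd h hg⟩
  choose partner hpartner using exists_partner
  have hRG (e : E) : Set.InjOn (MulAction.toPerm (β := ℍ)) (R e : Set SL(2, ℝ)) :=
    hG.mono fun g hg ↦ (mem e g hg).1
  have partner_injOn (e : E) : Set.InjOn (partner e) (R e) := fun g hg g' hg' h ↦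
    injOn_of_carries (partner := fun g ↦ (partner e g : ℍ × ℍ)) (hRG e)
      (fun g hg ↦ (mem e g hg).2.1) (fun g hg h ↦ (hpartner e g hg).1 (Subtype.ext h))
      (fun g hg ↦ (hpartner e g hg).2) hg hg' (congrArg Subtype.val h)
  have param_injOn (e : E) : Set.InjOn (fun g ↦ lineParam g (e : ℍ × ℍ).1) (R e) :=
    fun g hg g' hg' h ↦ hRG e hg hg' <| Equiv.ext <|
      smul_eq_smul_of_lineParam_eq (mem e g hg).2.1 (mem e g' hg').2.1 h
  obtain ⟨c, hc, hvanish⟩ := exists_ne_zero_forall_eq_zero_of_crossings (t := t)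
    (fun e : E ↦ transporterPoly t (e : ℍ × ℍ)) (fun e c ↦ natDegree_linePoly_le _ _ _ _ c)
    R card_eq partner (fun e g hg ↦ (hpartner e g hg).1) partner_injOn
    (fun e g ↦ lineParam g (e : ℍ × ℍ).1) param_injOn
    (fun e g hg c hc ↦ eval_transporterPoly_eq_zero (mem e g hg).2.1 (hpartner e g hg).2 hc)
    (by simpa only [Module.finrank_fintype_fun_eq_card, Fintype.card_coe]
      using mul_lt_card_formIndex hE)
  exact ⟨c, hc, fun e he ↦ hvanish ⟨e, he⟩⟩

theorem exists_card_multiplePoints_carries_le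
    (hG : Set.InjOn (MulAction.toPerm (β := ℍ)) (G : Set SL(2, ℝ))) (hE : E ⊆ A ×ˢ B)
    (hne : E.Nonempty) : ∃ e ∈ E, #(multiplePoints Carries G E e) ≤ 3 * (#A + #B) := by
  by_contra! rich
  set n := #A + #B
  set t := (#E - 1) / n
  have hpos : 0 < #E := hne.card_pos
  have hn : 0 < n := by
    obtain ⟨e, he⟩ := hne
    exact Nat.add_pos_left (card_pos.mpr ⟨e.1, (mem_product.mp (hE he)).1⟩) _
  have lower : t * n ≤ #E - 1 := Nat.div_mul_le_self _ _
  have upper : #E - 1 < t * n + n := Nat.lt_div_mul_add hn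
  obtain ⟨c, hc, h0⟩ := exists_form_ne_zero_forall_transporterPoly_eq_zero (t := t) hG rich (by lia)
  have := card_le_of_transporterPoly_eq_zero hc hE h0
  lia

theorem sum_card_multiplePoints_carries_le
    (hG : Set.InjOn (MulAction.toPerm (β := ℍ)) (G : Set SL(2, ℝ))) (hE : E ⊆ A ×ˢ B) :
    ∑ e ∈ E, #(multiplePoints Carries G E e) ≤ 6 * (#A + #B) * #E := by
  have := sum_card_multiplePoints_le (I := Carries) (G := G) fun E' hE' hne ↦
    exists_card_multiplePoints_carries_le hG (hE'.trans hE) hne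
  linarith

end TransporterLines

/-! ### Dyadic cells -/

section DyadicSquares

/-- The indices of the dyadic square of side `2⁻ⁿ` that contains `z`. -/
def dyadicIndex (n : ℕ) (z : ℂ) : ℤ × ℤ := (⌊(2 : ℝ) ^ n * z.re⌋, ⌊(2 : ℝ) ^ n * z.im⌋)

/-- The half-open dyadic square of side `2⁻ⁿ` with lower left corner `2⁻ⁿ (u.1 + u.2 i)`. -/
def dyadicSquare (n : ℕ) (u : ℤ × ℤ) : Set ℂ := {z | dyadicIndex n z = u}

/-- The indices of the four dyadic squares of half the side that make up the square of index `u`. -/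
def dyadicChildren (u : ℤ × ℤ) : Finset (ℤ × ℤ) :=
  {2 * u.1, 2 * u.1 + 1} ×ˢ {2 * u.2, 2 * u.2 + 1}

theorem floor_two_pow_mul_eq_ediv (n : ℕ) (x : ℝ) :
    ⌊(2 : ℝ) ^ n * x⌋ = ⌊(2 : ℝ) ^ (n + 1) * x⌋ / 2 := by
  have := Int.floor_div_natCast ((2 : ℝ) ^ (n + 1) * x) 2
  push_cast at this
  rw [← this, pow_succ]
  congr 1
  ring

theorem dyadicIndex_succ_mem_dyadicChildren {n : ℕ} {z : ℂ} {u : ℤ × ℤ} :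
    dyadicIndex (n + 1) z ∈ dyadicChildren u ↔ dyadicIndex n z = u := by
  simp only [dyadicIndex, dyadicChildren, floor_two_pow_mul_eq_ediv n, Prod.ext_iff, mem_product,
    mem_insert, mem_singleton]
  lia

theorem card_dyadicChildren_le (u : ℤ × ℤ) : #(dyadicChildren u) ≤ 4 := by
  rw [dyadicChildren, card_product]
  exact Nat.mul_le_mul card_le_two card_le_two

theorem dyadicIndex_eq_of_le {n m : ℕ} (h : n ≤ m) {z w : ℂ}
    (heq : dyadicIndex m z = dyadicIndex m w) : dyadicIndex n z = dyadicIndex n w := by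
  induction m, h using Nat.le_induction with
  | base => exact heq
  | succ m _ ih =>
    exact ih (dyadicIndex_succ_mem_dyadicChildren.mp
      (heq ▸ dyadicIndex_succ_mem_dyadicChildren.mpr rfl))

theorem dyadicSquare_subset_of_mem {n m : ℕ} (h : n ≤ m) {u v : ℤ × ℤ} {z : ℂ}
    (hu : z ∈ dyadicSquare n u) (hv : z ∈ dyadicSquare m v) :
    dyadicSquare m v ⊆ dyadicSquare n u := fun _ hw ↦
  (dyadicIndex_eq_of_le h (Eq.trans hw (Eq.symm hv))).trans hu

theorem dist_lt_of_dyadicIndex_eq {n : ℕ} {z w : ℂ} (heq : dyadicIndex n z = dyadicIndex n w) :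
    dist z w < 2 * (1 / 2) ^ n := by
  have hpow : (0 : ℝ) < 2 ^ n := by positivity
  have hre := Int.abs_sub_lt_one_of_floor_eq_floor (congrArg Prod.fst heq)
  have him := Int.abs_sub_lt_one_of_floor_eq_floor (congrArg Prod.snd heq)
  rw [← mul_sub, abs_mul, abs_of_pos hpow] at hre him
  have hnorm := Complex.norm_le_abs_re_add_abs_im (z - w)
  rw [Complex.sub_re, Complex.sub_im] at hnorm
  rw [dist_eq_norm, one_div, inv_pow, ← div_eq_mul_inv, lt_div_iff₀ hpow]
  nlinarith

theorem exists_forall_dyadicIndex_injOn (P : Finset ℂ) :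
    ∃ M, ∀ m ≥ M, Set.InjOn (dyadicIndex m) P := by
  have exists_level (x : ℂ × ℂ) :
      ∃ M, ∀ m ≥ M, dyadicIndex m x.1 = dyadicIndex m x.2 → x.1 = x.2 := by
    by_cases h : x.1 = x.2
    · exact ⟨0, fun _ _ _ ↦ h⟩
    obtain ⟨M, hM⟩ := exists_pow_lt_of_lt_one (half_pos (dist_pos.mpr h)) one_half_lt_one
    refine ⟨M, fun m hm heq ↦ absurd (dist_lt_of_dyadicIndex_eq (dyadicIndex_eq_of_le hm heq)) ?_⟩
    linarith
  choose M hM using exists_level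
  exact ⟨(P ×ˢ P).sup M, fun m hm z hz w hw ↦
    hM (z, w) m ((le_sup (f := M) (mk_mem_product hz hw)).trans hm)⟩

theorem exists_ball_subset_dyadicSquare (l : ℕ) (u : ℤ × ℤ) :
    ∃ w, Metric.ball w (1 / 4 * (1 / 2) ^ l) ⊆ dyadicSquare (l + 1) u := by
  have hpow : (0 : ℝ) < 2 ^ (l + 1) := by positivity
  have radius : (1 / 4 : ℝ) * (1 / 2) ^ l = 1 / 2 / 2 ^ (l + 1) := by
    rw [pow_succ, one_div_pow]
    ring
  have floor_eq (x : ℝ) (j : ℤ) (h : |x - (j + 1 / 2) / 2 ^ (l + 1)| < 1 / 2 / 2 ^ (l + 1)) :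
      ⌊(2 : ℝ) ^ (l + 1) * x⌋ = j := by
    have scaled : x - (j + 1 / 2) / 2 ^ (l + 1) =
        (2 ^ (l + 1) * x - (j + 1 / 2)) / 2 ^ (l + 1) := by
      field_simp
    rw [scaled, abs_div, abs_of_pos hpow, div_lt_div_iff_of_pos_right hpow, abs_lt] at h
    rw [Int.floor_eq_iff]
    constructor <;> linarith
  refine ⟨⟨(u.1 + 1 / 2) / 2 ^ (l + 1), (u.2 + 1 / 2) / 2 ^ (l + 1)⟩, fun y hy ↦ ?_⟩
  rw [Metric.mem_ball, dist_eq_norm, radius] at hy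
  exact Prod.ext (floor_eq _ _ ((Complex.abs_re_le_norm _).trans_lt hy))
    (floor_eq _ _ ((Complex.abs_im_le_norm _).trans_lt hy))

end DyadicSquares

section CellDecomposition

variable {α β : Type*}

/-- `S` is a family of disjoint sets with the property `IsCell` that cover `P`, each of which
contains at most `T` points of `P`. -/
structure IsCellDecomposition (IsCell : Set α → Prop) (T : ℕ) (P : Finset α)
    (S : Finset (Set α)) : Prop where
  isCell : ∀ C ∈ S, IsCell C
  pairwiseDisjoint : (S : Set (Set α)).PairwiseDisjoint id
  exists_mem : ∀ z ∈ P, ∃ C ∈ S, z ∈ C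
  card_le : ∀ C ∈ S, ∀ Q ⊆ P, (∀ z ∈ Q, z ∈ C) → #Q ≤ T

variable {IsCell IsCell' : Set α → Prop} {T : ℕ} {P : Finset α} {S : Finset (Set α)}

theorem IsCellDecomposition.mono (h : IsCellDecomposition IsCell T P S)
    (hcell : ∀ C ∈ S, IsCell C → IsCell' C) : IsCellDecomposition IsCell' T P S :=
  { h with isCell := fun C hC ↦ hcell C hC (h.isCell C hC) }

theorem isCellDecomposition_singleton {C : Set α} (hC : IsCell C) (hP : ∀ z ∈ P, z ∈ C)
    (hT : #P ≤ T) : IsCellDecomposition IsCell T P {C} where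
  isCell := by simpa using hC
  pairwiseDisjoint := by simp
  exists_mem := by simpa using hP
  card_le := fun _ _ _ hQ _ ↦ (card_le_card hQ).trans hT

open Classical in
theorem IsCellDecomposition.insert_biUnion [DecidableEq β] {f : α → β} {s : Finset β}
    {F : β → Finset (Set α)}
    (hF : ∀ c ∈ s, IsCellDecomposition (fun C ↦ IsCell C ∧ C ⊆ f ⁻¹' {c}) T {z ∈ P | f z = c} (F c))
    {C₀ : Set α} (hC₀ : IsCell C₀) (notMem : ∀ z ∈ C₀, f z ∉ s)
    (mem : ∀ z ∈ P, z ∉ C₀ → f z ∈ s) (hcard : ∀ Q ⊆ P, (∀ z ∈ Q, z ∈ C₀) → #Q ≤ T) :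
    IsCellDecomposition IsCell T P (insert C₀ (s.biUnion F)) := by
  have subset {c C} (hc : c ∈ s) (hC : C ∈ F c) : C ⊆ f ⁻¹' {c} := ((hF c hc).isCell C hC).2
  have disjoint_insert {c C} (hc : c ∈ s) (hC : C ∈ F c) : Disjoint C₀ C :=
    Set.disjoint_left.mpr fun z hz hzC ↦ notMem z hz (subset hc hC hzC ▸ hc)
  refine ⟨fun C hC ↦ ?_, ?_, fun z hz ↦ ?_, fun C hC Q hQP hQC ↦ ?_⟩
  · rcases mem_insert.mp hC with rfl | hC
    · exact hC₀
    · obtain ⟨c, hc, hC⟩ := mem_biUnion.mp hC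
      exact ((hF c hc).isCell C hC).1
  · rw [coe_insert, Set.pairwiseDisjoint_insert]
    refine ⟨fun C hC C' hC' hne ↦ ?_, fun C hC _ ↦ ?_⟩
    · obtain ⟨c, hc, hC⟩ := mem_biUnion.mp hC
      obtain ⟨c', hc', hC'⟩ := mem_biUnion.mp hC'
      by_cases hcc : c = c'
      · exact (hF c hc).pairwiseDisjoint hC (hcc ▸ hC') hne
      · exact Set.disjoint_left.mpr fun z hz hz' ↦
          hcc (Eq.trans (Eq.symm (subset hc hC hz)) (subset hc' hC' hz'))
    · obtain ⟨c, hc, hC⟩ := mem_biUnion.mp hC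
      exact disjoint_insert hc hC
  · by_cases hz₀ : z ∈ C₀
    · exact ⟨C₀, mem_insert_self _ _, hz₀⟩
    · have hc := mem z hz hz₀
      obtain ⟨C, hC, hzC⟩ := (hF _ hc).exists_mem z (mem_filter.mpr ⟨hz, rfl⟩)
      exact ⟨C, mem_insert_of_mem (mem_biUnion.mpr ⟨_, hc, hC⟩), hzC⟩
  · rcases mem_insert.mp hC with rfl | hC
    · exact hcard Q hQP hQC
    · obtain ⟨c, hc, hC⟩ := mem_biUnion.mp hC
      exact (hF c hc).card_le C hC Q
        (fun z hz ↦ mem_filter.mpr ⟨hQP hz, subset hc hC (hQC z hz)⟩) hQC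

open Classical in
theorem IsCellDecomposition.preimage {P : Finset β} {f : β → α} (hf : Function.Injective f)
    (h : IsCellDecomposition IsCell T (P.image f) S) {IsCell' : Set β → Prop}
    (hcell : ∀ C, IsCell C → IsCell' (f ⁻¹' C)) :
    IsCellDecomposition IsCell' T P (S.image (f ⁻¹' ·)) where
  isCell := forall_mem_image.mpr fun C hC ↦ hcell C (h.isCell C hC)
  pairwiseDisjoint := by
    rw [coe_image]
    rintro _ ⟨C, hC, rfl⟩ _ ⟨C', hC', rfl⟩ hne
    exact (h.pairwiseDisjoint hC hC' fun h ↦ hne (h ▸ rfl)).preimage f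
  exists_mem := fun z hz ↦ by
    obtain ⟨C, hC, hzC⟩ := h.exists_mem (f z) (mem_image_of_mem f hz)
    exact ⟨f ⁻¹' C, mem_image_of_mem _ hC, hzC⟩
  card_le := forall_mem_image.mpr fun C hC Q hQP hQC ↦ by
    rw [← card_image_of_injective Q hf]
    exact h.card_le C hC _ (image_subset_image hQP) (forall_mem_image.mpr hQC)

end CellDecomposition

section DyadicDecomposition

/-- A dyadic square, or the complement of a smaller dyadic square in it. The removed square may be
disjoint from the large one. -/
def IsDyadicCell (C : Set ℂ) : Prop :=
  ∃ n u m v, n ≤ m ∧ C = dyadicSquare n u \ dyadicSquare m v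

theorem isDyadicCell_dyadicSquare (n : ℕ) (u : ℤ × ℤ) : IsDyadicCell (dyadicSquare n u) := by
  refine ⟨n, u, n, (u.1 + 1, u.2), le_rfl, (sdiff_eq_left.mpr ?_).symm⟩
  refine Set.disjoint_left.mpr fun z hz hz' ↦ ?_
  simpa using congrArg Prod.fst (Eq.trans (Eq.symm hz) hz')

/-- A bound for `T` times the number of cells beyond the first in the decomposition of a set of `N`
points. -/
def cellBudget (T N : ℕ) : ℕ := if T < N then 8 * N - 4 * T else 0

theorem cellBudget_le (T N : ℕ) : cellBudget T N ≤ 8 * N := by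
  grind [cellBudget]

theorem sum_cellBudget_add_le {ι : Type*} {s : Finset ι} {f : ι → ℕ} {T N : ℕ} (hT : T ≤ N)
    (sum_le : ∑ i ∈ s, f i ≤ N) (le_sub : ∀ i ∈ s, f i + T ≤ N) :
    ∑ i ∈ s, cellBudget T (f i) + 8 * T ≤ 8 * N := by
  simp only [cellBudget, ← sum_filter]
  set H := {i ∈ s | T < f i}
  have sum_budget : ∑ i ∈ H, (8 * f i - 4 * T) + #H * (4 * T) = 8 * ∑ i ∈ H, f i := by
    rw [mul_sum, ← smul_eq_mul (#H), ← sum_const, ← sum_add_distrib]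
    refine sum_congr rfl fun i hi ↦ ?_
    have := (mem_filter.mp hi).2
    lia
  have sum_heavy : ∑ i ∈ H, f i ≤ N := (sum_le_sum_of_subset (filter_subset _ _)).trans sum_le
  rcases Nat.lt_or_ge (#H) 2 with hlt | hge
  · interval_cases hcard : #H
    · rw [card_eq_zero.mp hcard, sum_empty]
      lia
    · obtain ⟨i, hi⟩ := card_eq_one.mp hcard
      have := le_sub i (mem_filter.mp (hi ▸ mem_singleton_self i : i ∈ H)).1
      rw [hi, sum_singleton]
      lia
  · have := Nat.mul_le_mul_right (4 * T) hge
    lia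

theorem mul_card_insert_biUnion_le {ι α : Type*} [DecidableEq α] {s : Finset ι} {f : ι → ℕ}
    {T N : ℕ} (hs : #s ≤ 4) (hT : T < N) (sum_le : ∑ i ∈ s, f i ≤ N)
    (le_sub : ∀ i ∈ s, f i + T ≤ N) {F : ι → Finset α}
    (card_F : ∀ i, T * #(F i) ≤ T + cellBudget T (f i)) {a : α} :
    T * #(insert a (s.biUnion F)) ≤ T + cellBudget T N := by
  have card_insert : #(insert a (s.biUnion F)) ≤ ∑ i ∈ s, #(F i) + 1 :=
    (card_insert_le _ _).trans (Nat.add_le_add_right card_biUnion_le _)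
  have sum_budget := sum_cellBudget_add_le hT.le sum_le le_sub
  have sum_card : T * ∑ i ∈ s, #(F i) ≤ 4 * T + ∑ i ∈ s, cellBudget T (f i) := by
    rw [mul_sum]
    refine (sum_le_sum fun i _ ↦ card_F i).trans ?_
    rw [sum_add_distrib, sum_const, smul_eq_mul]
    exact Nat.add_le_add_right (Nat.mul_le_mul_right _ hs) _
  have := Nat.mul_le_mul_left T card_insert
  rw [cellBudget, if_pos hT]
  lia

/-- The level `m` is the last one at which some square misses fewer than `T` points of `P`. -/
theorem exists_dyadicSquare_splitting {T n : ℕ} {u : ℤ × ℤ} {P : Finset ℂ} (hT : 0 < T)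
    (hTP : T < #P) (hP : ∀ z ∈ P, z ∈ dyadicSquare n u) :
    ∃ m ≥ n, ∃ v, dyadicSquare m v ⊆ dyadicSquare n u ∧
      #P < #{z ∈ P | dyadicIndex m z = v} + T ∧
      ∀ c, #{z ∈ P | dyadicIndex (m + 1) z = c} + T ≤ #P := by
  let Heavy (m : ℕ) : Prop := ∃ v, #P < #{z ∈ P | dyadicIndex m z = v} + T
  have heavy_base : Heavy n := by
    refine ⟨u, ?_⟩
    rw [filter_true_of_mem (p := fun z ↦ dyadicIndex n z = u) hP]
    lia
  have exists_not_heavy : ∃ k, ¬ Heavy (n + k) := by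
    obtain ⟨M, hM⟩ := exists_forall_dyadicIndex_injOn P
    refine ⟨M, fun ⟨v, hv⟩ ↦ ?_⟩
    have : #{z ∈ P | dyadicIndex (n + M) z = v} ≤ 1 := by
      rw [card_le_one]
      intro a ha b hb
      rw [mem_filter] at ha hb
      exact hM _ (Nat.le_add_left _ _) ha.1 hb.1 (ha.2.trans hb.2.symm)
    lia
  classical
  obtain ⟨k, hk⟩ := Nat.exists_eq_succ_of_ne_zero (n := Nat.find exists_not_heavy)
    fun h ↦ Nat.find_spec exists_not_heavy (h ▸ heavy_base)
  have not_heavy := Nat.find_spec exists_not_heavy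
  rw [hk] at not_heavy
  obtain ⟨v, hv⟩ := not_not.mp (Nat.find_min exists_not_heavy (m := k) (by lia))
  obtain ⟨z, hz⟩ : Finset.Nonempty {z ∈ P | dyadicIndex (n + k) z = v} := by
    rw [← card_pos]
    lia
  rw [mem_filter] at hz
  exact ⟨n + k, Nat.le_add_right _ _, v,
    dyadicSquare_subset_of_mem (Nat.le_add_right _ _) (hP z hz.1) hz.2, hv,
    fun c ↦ not_lt.mp fun h ↦ not_heavy ⟨c, h⟩⟩

open Classical in
theorem exists_isCellDecomposition_dyadic {T : ℕ} (hT : 0 < T) {P : Finset ℂ} {n : ℕ} {u : ℤ × ℤ}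
    (hP : ∀ z ∈ P, z ∈ dyadicSquare n u) :
    ∃ S, IsCellDecomposition (fun C ↦ IsDyadicCell C ∧ C ⊆ dyadicSquare n u) T P S ∧
      T * #S ≤ T + cellBudget T (#P) := by
  induction hN : #P using Nat.strong_induction_on generalizing P n u with
  | _ N ih =>
  subst hN
  rcases Nat.lt_or_ge T (#P) with hTP | hPT
  swap
  · exact ⟨{dyadicSquare n u}, isCellDecomposition_singleton
      ⟨isDyadicCell_dyadicSquare n u, subset_rfl⟩ hP hPT, by simp⟩
  obtain ⟨m, hnm, v, hsub, heavy, light⟩ := exists_dyadicSquare_splitting hT hTP hP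
  let part (c : ℤ × ℤ) : Finset ℂ := {z ∈ P | dyadicIndex (m + 1) z = c}
  have (c : ℤ × ℤ) := ih _ (by have := light c; lia) (P := part c) (n := m + 1) (u := c)
    (fun z hz ↦ (mem_filter.mp hz).2) rfl
  choose F hF card_F using this
  have child_subset {c} (hc : c ∈ dyadicChildren v) : dyadicSquare (m + 1) c ⊆ dyadicSquare m v :=
    fun z hz ↦ dyadicIndex_succ_mem_dyadicChildren.mp (Eq.symm hz ▸ hc)
  refine ⟨insert (dyadicSquare n u \ dyadicSquare m v) ((dyadicChildren v).biUnion F), ?_, ?_⟩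
  · have cells (c) (hc : c ∈ dyadicChildren v) : IsCellDecomposition
        (fun C ↦ (IsDyadicCell C ∧ C ⊆ dyadicSquare n u) ∧ C ⊆ dyadicIndex (m + 1) ⁻¹' {c})
        T (part c) (F c) :=
      (hF c).mono fun C _ hC ↦ ⟨⟨hC.1, hC.2.trans ((child_subset hc).trans hsub)⟩, hC.2⟩
    refine .insert_biUnion cells ⟨⟨n, u, m, v, hnm, rfl⟩, Set.sdiff_subset⟩
      (fun z hz h ↦ hz.2 (dyadicIndex_succ_mem_dyadicChildren.mp h))
      (fun z hz h ↦ dyadicIndex_succ_mem_dyadicChildren.mpr (by_contra fun h' ↦ h ⟨hP z hz, h'⟩))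
      fun Q hQP hQ ↦ ?_
    have := card_filter_add_card_filter_not (s := P) (fun z ↦ dyadicIndex m z = v)
    have : #Q ≤ #{z ∈ P | ¬ dyadicIndex m z = v} :=
      card_le_card fun z hz ↦ mem_filter.mpr ⟨hQP hz, (hQ z hz).2⟩
    lia
  · refine mul_card_insert_biUnion_le (card_dyadicChildren_le v) hTP ?_ (fun c _ ↦ light c) card_F
    simp only [card_eq_sum_ones, sum_fiberwise_eq_sum_filter]
    exact sum_le_sum_of_subset (filter_subset _ _)

end DyadicDecomposition

/-! ### Thick sets -/

section Thick

variable {X Y : Type*} [PseudoMetricSpace X] [PseudoMetricSpace Y]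

/-- A set is thick if near each of its points, at every scale `t` that is at most the size of the
set as seen from that point, it contains a ball of radius comparable to `t`. Thickness is preserved
by Möbius maps up to constants, and disjoint thick sets cannot crowd around a smaller set. -/
def IsThick (ε M : ℝ) (C : Set X) : Prop :=
  ∀ z ∈ C, ∀ z' ∈ C, ∀ t : ℝ, 0 < t → t ≤ dist z z' →
    ∃ w, Metric.ball w (ε * t) ⊆ C ∧ dist w z ≤ M * t

variable {ε ε' M M' : ℝ} {C : Set X}

theorem IsThick.mono (h : IsThick ε M C) (hε : ε' ≤ ε) (hM : M ≤ M') : IsThick ε' M' C := by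
  intro z hz z' hz' t ht htd
  obtain ⟨w, hball, hdist⟩ := h z hz z' hz' t ht htd
  exact ⟨w, (Metric.ball_subset_ball (by gcongr)).trans hball, hdist.trans (by gcongr)⟩

theorem IsThick.image (h : IsThick ε M C) (e : X ≃ᵈ Y) : IsThick ε M (e '' C) := by
  rintro _ ⟨z, hz, rfl⟩ _ ⟨z', hz', rfl⟩ t ht htd
  have hratio : (0 : ℝ) < Dilation.ratio e := Dilation.ratio_pos e
  rw [Dilation.dist_eq, ← div_le_iff₀' hratio] at htd
  obtain ⟨w, hball, hdist⟩ := h z hz z' hz' _ (by positivity) htd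
  refine ⟨e w, fun y hy ↦ ⟨e.symm y, hball ?_, e.apply_symm_apply y⟩, ?_⟩
  · rw [Metric.mem_ball, ← e.apply_symm_apply y, Dilation.dist_eq] at hy
    rwa [Metric.mem_ball, ← mul_div_assoc, lt_div_iff₀' hratio]
  · rwa [Dilation.dist_eq, ← le_div_iff₀' hratio, mul_div_assoc]

theorem IsThick.image_mul_add {𝕜 : Type*} [NormedField 𝕜] {C : Set 𝕜} (h : IsThick ε M C)
    {a : 𝕜} (ha : a ≠ 0) (b : 𝕜) : IsThick ε M ((fun z ↦ a * z + b) '' C) :=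
  h.image (DilationEquiv.smulTorsor b ha)

end Thick

section ThickDyadicCell

theorem exists_dyadicChild_subset_compl_dyadicSquare {l m : ℕ} {z : ℂ} {v : ℤ × ℤ}
    (hz : z ∉ dyadicSquare m v) :
    ∃ k ∈ dyadicChildren (dyadicIndex l z), dyadicSquare (l + 1) k ⊆ (dyadicSquare m v)ᶜ := by
  set u := dyadicIndex l z
  have left_mem : (2 * u.1, 2 * u.2) ∈ dyadicChildren u := by simp [dyadicChildren]
  have right_mem : (2 * u.1 + 1, 2 * u.2) ∈ dyadicChildren u := by simp [dyadicChildren]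
  rcases Nat.lt_or_ge l m with hlm | hml
  · by_contra! hmeet
    obtain ⟨y, hy, hyv⟩ := Set.not_subset.mp (hmeet _ left_mem)
    obtain ⟨y', hy', hyv'⟩ := Set.not_subset.mp (hmeet _ right_mem)
    have hindex := dyadicIndex_eq_of_le hlm
      ((Set.notMem_compl_iff.mp hyv).trans (Set.notMem_compl_iff.mp hyv').symm)
    have := congrArg Prod.fst ((hy.symm.trans hindex).trans hy')
    simp at this
  · refine ⟨_, left_mem, fun y hy hyv ↦ hz ?_⟩
    have hyu : dyadicIndex l y = u := dyadicIndex_succ_mem_dyadicChildren.mp (hy ▸ left_mem)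
    exact (dyadicIndex_eq_of_le hml hyu.symm).trans hyv

theorem IsDyadicCell.isThick {C : Set ℂ} (hC : IsDyadicCell C) : IsThick (1 / 16) 1 C := by
  obtain ⟨n, u, m, v, -, rfl⟩ := hC
  intro z hz z' hz' t ht htd
  have hdist : dist z z' < 2 * (1 / 2) ^ n := dist_lt_of_dyadicIndex_eq (hz.1.trans hz'.1.symm)
  have hpow : (1 / 2 : ℝ) ^ n ≤ 1 := pow_le_one₀ (by norm_num) (by norm_num)
  obtain ⟨l, hlt, htl⟩ := exists_nat_pow_near_of_lt_one (x := t / 2) (y := (1 / 2 : ℝ))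
    (by linarith) (by linarith) (by norm_num) (by norm_num)
  have hnl : n < l + 1 := by
    by_contra! hln
    have := pow_le_pow_of_le_one (a := (1 / 2 : ℝ)) (by norm_num) (by norm_num) hln
    linarith
  obtain ⟨k, hk, hkv⟩ := exists_dyadicChild_subset_compl_dyadicSquare (l := l + 1) hz.2
  obtain ⟨w, hw⟩ := exists_ball_subset_dyadicSquare (l + 1) k
  have index_eq {y : ℂ} (hy : y ∈ dyadicSquare (l + 1 + 1) k) :
      dyadicIndex (l + 1) y = dyadicIndex (l + 1) z :=
    dyadicIndex_succ_mem_dyadicChildren.mp (Eq.symm hy ▸ hk)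
  refine ⟨w, fun y hy ↦ ?_, ?_⟩
  · have hyk := hw (Metric.ball_subset_ball (by rw [pow_succ]; linarith) hy)
    exact ⟨(dyadicIndex_eq_of_le hnl.le (index_eq hyk)).trans hz.1, hkv hyk⟩
  · have := dist_lt_of_dyadicIndex_eq (index_eq (hw (Metric.mem_ball_self (by positivity))))
    linarith

end ThickDyadicCell

section Inversion

open scoped Pointwise

variable {𝕜 : Type*} [NormedField 𝕜] {ε s : ℝ} {C : Set 𝕜}

theorem ball_inv_subset_inv_ball {w : 𝕜} (hw : w ≠ 0) {r R : ℝ} (hR : 0 < R)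
    (h : r * ‖w‖ * (‖w‖ + R) ≤ R) : Metric.ball w⁻¹ r ⊆ (Metric.ball w R \ {0})⁻¹ := by
  intro y hy
  have hw_pos : 0 < ‖w‖ := norm_pos_iff.mpr hw
  set d := dist y w⁻¹ with hd
  have hd_lt : d * ‖w‖ * (‖w‖ + R) < R := lt_of_lt_of_le (by gcongr; exact hy) h
  have hnorm : 1 - d * ‖w‖ ≤ ‖y‖ * ‖w‖ := by
    have : ‖w⁻¹‖ - ‖y‖ ≤ d := by
      rw [hd, dist_comm, dist_eq_norm]
      exact norm_sub_norm_le _ _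
    have := mul_le_mul_of_nonneg_right this hw_pos.le
    rw [sub_mul, norm_inv, inv_mul_cancel₀ hw_pos.ne'] at this
    linarith
  have hdw : d * ‖w‖ < R * ‖y‖ := by
    refine lt_of_mul_lt_mul_right ?_ hw_pos.le
    calc d * ‖w‖ * ‖w‖ < R * (1 - d * ‖w‖) := by linarith
      _ ≤ R * ‖y‖ * ‖w‖ := by rw [mul_assoc]; gcongr
  have hy_pos : 0 < ‖y‖ := pos_of_mul_pos_right (lt_of_le_of_lt (by positivity) hdw) hR.le
  have hy0 : y ≠ 0 := norm_pos_iff.mp hy_pos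
  refine ⟨?_, inv_ne_zero hy0⟩
  have hdist := dist_inv_inv₀ hy0 (inv_ne_zero hw)
  rw [inv_inv, norm_inv] at hdist
  rw [Metric.mem_ball, hdist, div_lt_iff₀ (by positivity)]
  calc d = d * ‖w‖ * ‖w‖⁻¹ := (mul_inv_cancel_right₀ hw_pos.ne' d).symm
    _ < R * ‖y‖ * ‖w‖⁻¹ := by gcongr
    _ = R * (‖y‖ * ‖w‖⁻¹) := mul_assoc _ _ _

theorem inv_sdiff_subset_inv_sdiff {C D : Set 𝕜} (h : C ⊆ D) : (C \ {0})⁻¹ ⊆ (D \ {0})⁻¹ :=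
  Set.inv_subset_inv.mpr (Set.sdiff_subset_sdiff_left h)

theorem IsThick.exists_ball_subset_inv_of_mul_norm_le (h : IsThick ε 1 C) (hε : 0 < ε) (hε1 : ε ≤ 1)
    {z z' : 𝕜} (hz : z ∈ C) (hz0 : z ≠ 0) (hz' : z' ∈ C) (hs : 0 < s)
    (hsd : s * (‖z‖ * ‖z'‖) ≤ dist z z') (hnear : s * ‖z‖ ≤ 4) :
    ∃ w, Metric.ball w (ε / 128 * s) ⊆ (C \ {0})⁻¹ ∧ dist w z⁻¹ ≤ s := by
  have hz_pos : 0 < ‖z‖ := norm_pos_iff.mpr hz0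
  have scale_le : s * ‖z‖ ^ 2 / 8 ≤ dist z z' := by
    have htri : ‖z‖ - ‖z'‖ ≤ dist z z' := dist_eq_norm z z' ▸ norm_sub_norm_le _ _
    rcases le_or_gt (‖z‖ / 2) ‖z'‖ with hlarge | hsmall
    · have := mul_le_mul_of_nonneg_left hlarge (show 0 ≤ s * ‖z‖ by positivity)
      nlinarith [show 0 ≤ s * ‖z‖ ^ 2 by positivity]
    · nlinarith
  obtain ⟨w, hball, hdist⟩ := h z hz z' hz' (s * ‖z‖ ^ 2 / 8) (by positivity) scale_le
  rw [one_mul] at hdist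
  have hscale : s * ‖z‖ ^ 2 / 8 ≤ ‖z‖ / 2 := by nlinarith
  have hw_lower : ‖z‖ / 2 ≤ ‖w‖ := by
    have : ‖z‖ - ‖w‖ ≤ dist w z := by
      rw [dist_comm, dist_eq_norm]
      exact norm_sub_norm_le _ _
    linarith
  have hw_upper : ‖w‖ ≤ 3 / 2 * ‖z‖ := by
    have : ‖w‖ - ‖z‖ ≤ dist w z := dist_eq_norm w z ▸ norm_sub_norm_le _ _
    linarith
  have hw0 : w ≠ 0 := norm_pos_iff.mp (by linarith)
  refine ⟨w⁻¹, (ball_inv_subset_inv_ball hw0 (by positivity) ?_).trans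
    (inv_sdiff_subset_inv_sdiff hball), ?_⟩
  · calc ε / 128 * s * ‖w‖ * (‖w‖ + ε * (s * ‖z‖ ^ 2 / 8))
        ≤ ε / 128 * s * (3 / 2 * ‖z‖) * (3 / 2 * ‖z‖ + 1 * (‖z‖ / 2)) := by gcongr
      _ ≤ ε * (s * ‖z‖ ^ 2 / 8) := by nlinarith [show 0 ≤ ε * (s * ‖z‖ ^ 2) by positivity]
  · rw [dist_inv_inv₀ hw0 hz0, div_le_iff₀ (by positivity)]
    calc dist w z ≤ s * ‖z‖ ^ 2 / 8 := hdist
      _ ≤ s * (‖z‖ / 2 * ‖z‖) := by nlinarith [show 0 ≤ s * ‖z‖ ^ 2 by positivity]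
      _ ≤ s * (‖w‖ * ‖z‖) := by gcongr

theorem exists_ball_subset_ball_le_norm {E : Type*} [NormedAddCommGroup E] [NormedSpace ℝ E]
    [Nontrivial E] (w : E) {r : ℝ} (hr : 0 ≤ r) :
    ∃ w', Metric.ball w' r ⊆ Metric.ball w (4 * r) ∧ r ≤ ‖w'‖ ∧ dist w' w ≤ 3 * r := by
  rcases le_or_gt r ‖w‖ with hlarge | hsmall
  · exact ⟨w, Metric.ball_subset_ball (by linarith), hlarge, by simpa using hr⟩
  · obtain ⟨v, hv⟩ := exists_norm_eq E (c := 3 * r) (by linarith)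
    have hdist : dist (w + v) w = 3 * r := by rw [dist_self_add_left, hv]
    refine ⟨w + v, Metric.ball_subset_ball' (by linarith), ?_, hdist.le⟩
    have := norm_sub_norm_le v (-w)
    rw [sub_neg_eq_add, norm_neg, add_comm v w] at this
    linarith

theorem norm_inv_le_div_four (hs : 0 < s) {z : 𝕜} (hfar : 4 < s * ‖z‖) : ‖z⁻¹‖ ≤ s / 4 := by
  have hz_pos : 0 < ‖z‖ := by
    by_contra! h
    nlinarith
  rw [norm_inv, ← one_div, div_le_div_iff₀ hz_pos (by norm_num)]
  linarith

theorem norm_le_of_le_dist_inv_inv (hs : 0 < s) {z z' : 𝕜} (hsd : s ≤ dist z⁻¹ z'⁻¹)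
    (hfar : 4 < s * ‖z‖) : ‖z'‖ ≤ 4 / 3 / s := by
  have hz_inv := norm_inv_le_div_four hs hfar
  have htri : dist z⁻¹ z'⁻¹ ≤ ‖z⁻¹‖ + ‖z'⁻¹‖ := dist_le_norm_add_norm _ _
  have hz' := inv_anti₀ (by positivity) (show 3 * s / 4 ≤ ‖z'⁻¹‖ by linarith)
  rw [norm_inv, inv_inv] at hz'
  exact hz'.trans_eq (by field)

theorem div_le_dist_of_le_dist_inv_inv (hs : 0 < s) {z z' : 𝕜} (hsd : s ≤ dist z⁻¹ z'⁻¹)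
    (hfar : 4 < s * ‖z‖) : 2 / s ≤ dist z' z := by
  have hz'_norm := norm_le_of_le_dist_inv_inv hs hsd hfar
  have htri : ‖z‖ - ‖z'‖ ≤ dist z' z := by
    rw [dist_comm, dist_eq_norm]
    exact norm_sub_norm_le _ _
  have : 4 / s ≤ ‖z‖ := by rw [div_le_iff₀' hs]; exact hfar.le
  have : 4 / s = 2 / s + 2 / 3 / s + 4 / 3 / s := by ring
  have : 0 ≤ 2 / 3 / s := by positivity
  linarith

theorem IsThick.exists_ball_subset_inv_of_lt_mul_norm [NormedSpace ℝ 𝕜] (h : IsThick ε 1 C)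
    (hε : 0 < ε) (hε1 : ε ≤ 1) {z z' : 𝕜} (hz : z ∈ C) (hz' : z' ∈ C) (hs : 0 < s)
    (hsd : s ≤ dist z⁻¹ z'⁻¹) (hfar : 4 < s * ‖z‖) :
    ∃ w, Metric.ball w (ε / 128 * s) ⊆ (C \ {0})⁻¹ ∧ dist w z⁻¹ ≤ 4 / ε * s := by
  have hz_inv := norm_inv_le_div_four hs hfar
  have hz'_norm := norm_le_of_le_dist_inv_inv hs hsd hfar
  have scale_le := div_le_dist_of_le_dist_inv_inv hs hsd hfar
  obtain ⟨w₀, hball₀, hdist₀⟩ := h z' hz' z hz (2 / s) (by positivity) scale_le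
  obtain ⟨w, hball, hw_lower, hdist⟩ :=
    exists_ball_subset_ball_le_norm w₀ (r := ε / (2 * s)) (by positivity)
  have hw_pos : 0 < ‖w‖ := lt_of_lt_of_le (by positivity) hw_lower
  have hw_upper : ‖w‖ ≤ 5 / s := by
    have hnorm : ‖w‖ - ‖z'‖ ≤ dist w z' := dist_eq_norm w z' ▸ norm_sub_norm_le _ _
    have htri := dist_triangle w w₀ z'
    have : 3 * (ε / (2 * s)) ≤ 3 * (1 / (2 * s)) := by gcongr
    have : 5 / s = 4 / 3 / s + 3 * (1 / (2 * s)) + 2 / s + 1 / 6 / s := by field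
    have : 0 ≤ 1 / 6 / s := by positivity
    linarith
  refine ⟨w⁻¹, (ball_inv_subset_inv_ball (norm_pos_iff.mp hw_pos) (by positivity) ?_).trans
    (inv_sdiff_subset_inv_sdiff ((hball.trans_eq ?_).trans hball₀)), ?_⟩
  · calc ε / 128 * s * ‖w‖ * (‖w‖ + ε / (2 * s))
        ≤ ε / 128 * s * (5 / s) * (5 / s + 1 / (2 * s)) := by gcongr
      _ = 55 / 128 * (ε / (2 * s)) := by field
      _ ≤ ε / (2 * s) := mul_le_of_le_one_left (by positivity) (by norm_num)
  · congr 1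
    ring
  · have hw_inv : ‖w⁻¹‖ ≤ 2 / ε * s := by
      rw [norm_inv]
      exact (inv_anti₀ (by positivity) hw_lower).trans_eq (by field)
    have : 2 ≤ 2 / ε := by rw [le_div_iff₀ hε]; linarith
    calc dist w⁻¹ z⁻¹ ≤ ‖w⁻¹‖ + ‖z⁻¹‖ := dist_le_norm_add_norm _ _
      _ ≤ 2 / ε * s + s / 4 := add_le_add hw_inv hz_inv
      _ ≤ 2 / ε * s + 2 / ε * s := by gcongr; nlinarith
      _ = 4 / ε * s := by ring

theorem IsThick.inv [NormedSpace ℝ 𝕜] (h : IsThick ε 1 C) (hε : 0 < ε) (hε1 : ε ≤ 1) :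
    IsThick (ε / 128) (4 / ε) (C \ {0})⁻¹ := by
  rintro a ⟨ha, ha0⟩ a' ⟨ha', ha0'⟩ s hs hsd
  rw [← inv_inv a, ← inv_inv a'] at hsd
  rw [← inv_inv a]
  set z := a⁻¹
  set z' := a'⁻¹
  rcases le_or_gt (s * ‖z‖) 4 with hnear | hfar
  · have hsd_mul : s * (‖z‖ * ‖z'‖) ≤ dist z z' := by
      rwa [dist_inv_inv₀ ha0 ha0', le_div_iff₀ (by positivity)] at hsd
    obtain ⟨w, hball, hdist⟩ :=
      h.exists_ball_subset_inv_of_mul_norm_le hε hε1 ha ha0 ha' hs hsd_mul hnear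
    refine ⟨w, hball, hdist.trans (le_mul_of_one_le_left hs.le ?_)⟩
    rw [le_div_iff₀ hε]
    linarith
  · exact h.exists_ball_subset_inv_of_lt_mul_norm hε hε1 ha ha' hs hsd hfar

end Inversion

section Mobius

open scoped Pointwise

/-- The image of `C` without the pole under the Möbius map `z ↦ (p z + q) / (r z + s)`. -/
def mobiusImage {𝕜 : Type*} [Field 𝕜] (p q r s : 𝕜) (C : Set 𝕜) : Set 𝕜 :=
  {w | ∃ z ∈ C, r * z + s ≠ 0 ∧ w = (p * z + q) / (r * z + s)}

theorem disjoint_mobiusImage {𝕜 : Type*} [Field 𝕜] {p q r s : 𝕜} (hdet : p * s - q * r ≠ 0)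
    {C C' : Set 𝕜} (h : Disjoint C C') :
    Disjoint (mobiusImage p q r s C) (mobiusImage p q r s C') := by
  rw [Set.disjoint_left]
  rintro w ⟨z, hz, hz0, rfl⟩ ⟨z', hz', hz0', heq⟩
  rw [div_eq_div_iff hz0 hz0'] at heq
  have : z = z' := mul_left_cancel₀ hdet (by linear_combination heq)
  exact Set.disjoint_left.mp h hz (this ▸ hz')

variable {𝕜 : Type*} [NormedField 𝕜] {p q r s : 𝕜} {C : Set 𝕜}

theorem mobiusImage_of_eq_zero (hs : s ≠ 0) :
    mobiusImage p q 0 s C = (fun z ↦ p / s * z + q / s) '' C := by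
  ext w
  simp only [mobiusImage, zero_mul, zero_add, ne_eq, hs, not_false_eq_true, true_and,
    Set.mem_ofPred_eq, Set.mem_image]
  refine exists_congr fun z ↦ and_congr_right fun _ ↦ ?_
  rw [add_div, mul_div_right_comm, eq_comm]

theorem mobiusImage_of_ne_zero (hr : r ≠ 0) :
    mobiusImage p q r s C = (fun z ↦ -(p * s - q * r) / r * z + p / r) ''
      (((fun z ↦ r * z + s) '' C) \ {0})⁻¹ := by
  have apply_eq {z : 𝕜} (hz : r * z + s ≠ 0) :
      (p * z + q) / (r * z + s) = -(p * s - q * r) / r * (r * z + s)⁻¹ + p / r := by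
    rw [div_eq_iff hz, add_mul, mul_assoc, inv_mul_cancel₀ hz]
    field
  ext w
  constructor
  · rintro ⟨z, hz, hz0, rfl⟩
    refine ⟨(r * z + s)⁻¹, ⟨?_, inv_ne_zero (inv_ne_zero hz0)⟩, (apply_eq hz0).symm⟩
    exact ⟨z, hz, (inv_inv _).symm⟩
  · rintro ⟨y, ⟨⟨z, hz, hzy⟩, hy0⟩, rfl⟩
    have hz0 : r * z + s ≠ 0 := fun h ↦ hy0 (hzy.symm.trans h)
    refine ⟨z, hz, hz0, ?_⟩
    rw [apply_eq hz0, ← inv_inv y]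
    exact congrArg (fun x ↦ -(p * s - q * r) / r * x⁻¹ + p / r) hzy.symm

theorem IsThick.mobiusImage [NormedSpace ℝ 𝕜] {ε : ℝ} (h : IsThick ε 1 C) (hε : 0 < ε)
    (hε1 : ε ≤ 1) (hdet : p * s - q * r ≠ 0) :
    IsThick (ε / 128) (4 / ε) (mobiusImage p q r s C) := by
  rcases eq_or_ne r 0 with rfl | hr
  · rw [mul_zero, sub_zero] at hdet
    obtain ⟨hp, hs⟩ := mul_ne_zero_iff.mp hdet
    rw [mobiusImage_of_eq_zero hs]
    refine (h.image_mul_add (div_ne_zero hp hs) _).mono (by linarith) ?_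
    rw [le_div_iff₀ hε]
    linarith
  · rw [mobiusImage_of_ne_zero hr]
    have hcoeff := div_ne_zero (neg_ne_zero.mpr hdet) hr
    exact ((h.image_mul_add hr s).inv hε hε1).image_mul_add hcoeff _

end Mobius

section Packing

open MeasureTheory Module

variable {E : Type*} [NormedAddCommGroup E] [NormedSpace ℝ E] [FiniteDimensional ℝ E]
  {ι κ : Type*} {I : Finset ι} {J : Finset κ} {F : ι → Set E} {F' : κ → Set E} {ε M : ℝ}

theorem card_mul_pow_finrank_le_of_disjoint_balls {w : ι → E} {x : E} {r R : ℝ} (hr : 0 < r)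
    (hR : 0 < R) (hdisj : (I : Set ι).PairwiseDisjoint fun i ↦ Metric.ball (w i) r)
    (hsub : ∀ i ∈ I, Metric.ball (w i) r ⊆ Metric.ball x R) :
    #I * r ^ finrank ℝ E ≤ R ^ finrank ℝ E := by
  borelize E
  let μ : Measure E := Measure.addHaar
  have hmeasure : ∑ i ∈ I, μ (Metric.ball (w i) r) ≤ μ (Metric.ball x R) := by
    rw [← measure_biUnion_finset hdisj fun i _ ↦ measurableSet_ball]
    exact measure_mono (Set.iUnion₂_subset hsub)
  simp only [Measure.addHaar_ball_of_pos μ _ hr, Measure.addHaar_ball_of_pos μ _ hR, sum_const,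
    nsmul_eq_mul, ← mul_assoc] at hmeasure
  have hunit_pos : μ (Metric.ball 0 1) ≠ 0 := (Metric.measure_ball_pos μ 0 one_pos).ne'
  rw [ENNReal.mul_le_mul_iff_left hunit_pos measure_ball_lt_top.ne, ← ENNReal.ofReal_natCast,
    ← ENNReal.ofReal_mul (by positivity), ENNReal.ofReal_le_ofReal_iff (by positivity)] at hmeasure
  exact hmeasure

/-- The number of disjoint sets in dimension `d`, thick with constants `ε` and `M`, that can meet a
set of smaller diameter. -/
def packingBound (ε M : ℝ) (d : ℕ) : ℝ := ((4 + M + ε) / ε) ^ d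

theorem one_le_packingBound (hε : 0 < ε) (hM : 0 ≤ M) (d : ℕ) : 1 ≤ packingBound ε M d := by
  refine one_le_pow₀ ?_
  rw [le_div_iff₀ hε]
  linarith

theorem exists_le_dist_of_ofReal_le_ediam {X : Type*} [PseudoMetricSpace X] {C : Set X} {d : ℝ}
    (hd : 0 < d) (h : ENNReal.ofReal d ≤ Metric.ediam C) (z : X) : ∃ z' ∈ C, d / 4 ≤ dist z z' := by
  by_contra! hclose
  have : Metric.ediam C ≤ ENNReal.ofReal (d / 2) := by
    refine Metric.ediam_le fun x hx y hy ↦ ?_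
    rw [edist_dist]
    refine ENNReal.ofReal_le_ofReal ?_
    linarith [dist_triangle_left x y z, hclose x hx, hclose y hy]
  have := (ENNReal.ofReal_le_ofReal_iff (by positivity)).mp (h.trans this)
  linarith

theorem card_le_packingBound (hε : 0 < ε) (hM : 0 ≤ M) (hdisj : (I : Set ι).PairwiseDisjoint F)
    (hthick : ∀ i ∈ I, IsThick ε M (F i)) {S : Set E} (hS : Metric.ediam S ≠ ⊤)
    (hmeet : ∀ i ∈ I, (F i ∩ S).Nonempty) (hdiam : ∀ i ∈ I, Metric.ediam S ≤ Metric.ediam (F i)) :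
    #I ≤ packingBound ε M (finrank ℝ E) := by
  have hone := one_le_packingBound hε hM (finrank ℝ E)
  rcases eq_or_ne (Metric.ediam S) 0 with hS0 | hS0
  · have : #I ≤ 1 := card_le_one.mpr fun i hi j hj ↦ by
      obtain ⟨x, hxF, hxS⟩ := hmeet i hi
      obtain ⟨y, hyF, hyS⟩ := hmeet j hj
      have hxy : x = y := Metric.ediam_eq_zero_iff.mp hS0 hxS hyS
      exact hdisj.elim_set hi hj x hxF (hxy ▸ hyF)
    exact le_trans (mod_cast this) hone
  rcases I.eq_empty_or_nonempty with rfl | ⟨i₀, hi₀⟩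
  · exact le_trans (by simp) hone
  obtain ⟨x, -, hxS⟩ := hmeet i₀ hi₀
  set d := (Metric.ediam S).toReal
  have hd : 0 < d := ENNReal.toReal_pos hS0 hS
  have hSd : Metric.ediam S = ENNReal.ofReal d := (ENNReal.ofReal_toReal hS).symm
  have exists_ball (i) (hi : i ∈ I) : ∃ w, Metric.ball w (ε * (d / 4)) ⊆ F i ∧
      dist w x ≤ d + M * (d / 4) := by
    obtain ⟨z, hzF, hzS⟩ := hmeet i hi
    obtain ⟨z', hz'F, hdist⟩ := exists_le_dist_of_ofReal_le_ediam hd (hSd ▸ hdiam i hi) z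
    obtain ⟨w, hball, hwz⟩ := hthick i hi z hzF z' hz'F (d / 4) (by linarith) hdist
    have hzx : dist z x ≤ d := by
      have := Metric.edist_le_ediam_of_mem hzS hxS
      rwa [edist_dist, hSd, ENNReal.ofReal_le_ofReal_iff hd.le] at this
    exact ⟨w, hball, by linarith [dist_triangle w z x]⟩
  choose! w hball hdist using exists_ball
  have hcard := card_mul_pow_finrank_le_of_disjoint_balls (I := I) (w := w) (x := x)
    (r := ε * (d / 4)) (R := (4 + M + ε) * (d / 4)) (by positivity) (by positivity)
    (fun i hi j hj hij ↦ (hdisj hi hj hij).mono (hball i hi) (hball j hj))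
    (fun i hi ↦ Metric.ball_subset_ball' (by linarith [hdist i hi]))
  rw [mul_pow, mul_pow, ← mul_assoc] at hcard
  rw [packingBound, div_pow, le_div_iff₀ (by positivity)]
  exact le_of_mul_le_mul_right hcard (by positivity)

open Classical in
theorem card_filter_nonempty_inter_and_ediam_le (hε : 0 < ε) (hM : 0 ≤ M)
    (hdisj : (I : Set ι).PairwiseDisjoint F) (hthick : ∀ i ∈ I, IsThick ε M (F i)) :
    #{p ∈ I ×ˢ J | (F p.1 ∩ F' p.2).Nonempty ∧ Metric.ediam (F' p.2) ≠ ⊤ ∧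
      Metric.ediam (F' p.2) ≤ Metric.ediam (F p.1)} ≤ packingBound ε M (finrank ℝ E) * #J := by
  rw [card_filter, sum_product_right]
  simp only [← card_filter]
  rw [Nat.cast_sum, mul_comm, ← nsmul_eq_mul]
  refine sum_le_card_nsmul _ _ _ fun j _ ↦ ?_
  by_cases hj : Metric.ediam (F' j) = ⊤
  · simp [hj, zero_le_one.trans (one_le_packingBound hε hM (finrank ℝ E))]
  · exact card_le_packingBound hε hM
      (hdisj.subset fun i hi ↦ (mem_filter.mp hi).1) (fun i hi ↦ hthick i (mem_filter.mp hi).1) hj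
      (fun i hi ↦ (mem_filter.mp hi).2.1) (fun i hi ↦ (mem_filter.mp hi).2.2.2)

open Classical in
theorem card_filter_nonempty_inter_le (hε : 0 < ε) (hM : 0 ≤ M)
    (hdisj : (I : Set ι).PairwiseDisjoint F) (hthick : ∀ i ∈ I, IsThick ε M (F i))
    (hdisj' : (J : Set κ).PairwiseDisjoint F') (hthick' : ∀ j ∈ J, IsThick ε M (F' j))
    (hbdd : ∀ j ∈ J, Metric.ediam (F' j) ≠ ⊤) :
    #{p ∈ I ×ˢ J | (F p.1 ∩ F' p.2).Nonempty} ≤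
      packingBound ε M (finrank ℝ E) * (#I + #J) := by
  have hF := card_filter_nonempty_inter_and_ediam_le (F' := F') (J := J) hε hM hdisj hthick
  have hF' := card_filter_nonempty_inter_and_ediam_le (F' := F) (J := I) hε hM hdisj' hthick'
  set A := {p ∈ I ×ˢ J | (F p.1 ∩ F' p.2).Nonempty ∧ Metric.ediam (F' p.2) ≠ ⊤ ∧
    Metric.ediam (F' p.2) ≤ Metric.ediam (F p.1)}
  set B := {p ∈ J ×ˢ I | (F' p.1 ∩ F p.2).Nonempty ∧ Metric.ediam (F p.2) ≠ ⊤ ∧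
    Metric.ediam (F p.2) ≤ Metric.ediam (F' p.1)}
  have hcover : {p ∈ I ×ˢ J | (F p.1 ∩ F' p.2).Nonempty} ⊆ A ∪ B.image Prod.swap := by
    rintro ⟨i, j⟩ hij
    obtain ⟨hmem, hmeet⟩ := mem_filter.mp hij
    obtain ⟨hi, hj⟩ := mem_product.mp hmem
    rcases le_or_gt (Metric.ediam (F' j)) (Metric.ediam (F i)) with hle | hlt
    · exact mem_union_left _ (mem_filter.mpr ⟨hmem, hmeet, hbdd j hj, hle⟩)
    · refine mem_union_right _ (mem_image.mpr ⟨(j, i), mem_filter.mpr ?_, rfl⟩)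
      exact ⟨mem_product.mpr ⟨hj, hi⟩, Set.inter_comm _ _ ▸ hmeet, hlt.ne_top, hlt.le⟩
  have hcard : #{p ∈ I ×ˢ J | (F p.1 ∩ F' p.2).Nonempty} ≤ #A + #B :=
    (card_le_card hcover).trans ((card_union_le _ _).trans (by gcongr; exact card_image_le))
  have : (#{p ∈ I ×ˢ J | (F p.1 ∩ F' p.2).Nonempty} : ℝ) ≤ #A + #B := mod_cast hcard
  linarith

end Packing

section ThickDecomposition

theorem ediam_dyadicSquare_ne_top (n : ℕ) (u : ℤ × ℤ) : Metric.ediam (dyadicSquare n u) ≠ ⊤ :=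
  (Metric.isBounded_iff.mpr ⟨2 * (1 / 2) ^ n, fun _ hz _ hw ↦
    (dist_lt_of_dyadicIndex_eq (Eq.trans hz (Eq.symm hw))).le⟩).ediam_ne_top

theorem dyadicIndex_zero_eq_zero_of_norm_lt {r : ℝ} {z : ℂ} (hz : ‖z‖ < r) :
    dyadicIndex 0 ((2 * r)⁻¹ • (z - ⟨-r, -r⟩)) = (0, 0) := by
  have floor_eq_zero {x : ℝ} (hx : |x| ≤ ‖z‖) : ⌊(2 * r)⁻¹ * (x + r)⌋ = 0 := by
    obtain ⟨hlower, hupper⟩ := abs_lt.mp (hx.trans_lt hz)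
    rw [Int.floor_eq_zero_iff, inv_mul_eq_div]
    exact ⟨div_nonneg (by linarith) (by linarith), by rw [div_lt_one (by linarith)]; linarith⟩
  simp only [dyadicIndex, pow_zero, one_mul]
  refine Prod.ext ?_ ?_
  · simpa [mul_add] using floor_eq_zero (Complex.abs_re_le_norm z)
  · simpa [mul_add] using floor_eq_zero (Complex.abs_im_le_norm z)

open Classical in
theorem exists_isCellDecomposition_isThick {T : ℕ} (hT : 0 < T) (P : Finset ℂ) :
    ∃ S, IsCellDecomposition (fun C ↦ IsThick (1 / 16) 1 C ∧ Metric.ediam C ≠ ⊤) T P S ∧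
      T * #S ≤ T + 8 * #P := by
  obtain ⟨r, hr, hnorm⟩ := P.finite_toSet.isBounded.exists_pos_norm_lt
  let e : ℂ ≃ᵈ ℂ := DilationEquiv.smulTorsor (⟨-r, -r⟩ : ℂ) (k := 2 * r) (by positivity)
  have hmem : ∀ w ∈ P.image e.symm, w ∈ dyadicSquare 0 (0, 0) :=
    forall_mem_image.mpr fun z hz ↦ dyadicIndex_zero_eq_zero_of_norm_lt (hnorm z hz)
  obtain ⟨S, hS, hcard⟩ := exists_isCellDecomposition_dyadic hT hmem
  refine ⟨S.image (e.symm ⁻¹' ·), hS.preimage e.symm.injective ?_, ?_⟩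
  · rintro C ⟨hC, hsub⟩
    have hpreimage : e.symm ⁻¹' C = e '' C := (e.toEquiv.image_eq_preimage_symm C).symm
    rw [hpreimage]
    refine ⟨hC.isThick.image e, ?_⟩
    rw [Dilation.ediam_image]
    exact ENNReal.mul_ne_top ENNReal.coe_ne_top
      (ne_top_of_le_ne_top (ediam_dyadicSquare_ne_top 0 (0, 0)) (Metric.ediam_mono hsub))
  · rw [card_image_of_injective _ e.symm.injective] at hcard
    have := Nat.mul_le_mul_left T (card_image_le (s := S) (f := (e.symm ⁻¹' ·)))
    linarith [cellBudget_le T #P]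

end ThickDecomposition

/-! ### Rich elements of `SL₂` -/

section ReturningPoints

/-- The points of `P` that `g` maps back into `P`; their number is the richness of `g`. -/
def returningPoints {G α : Type*} [SMul G α] [DecidableEq α] (P : Finset α) (g : G) : Finset α :=
  {a ∈ P | g • a ∈ P}

theorem mem_returningPoints {G α : Type*} [SMul G α] [DecidableEq α] {P : Finset α} {g : G}
    {a : α} : a ∈ returningPoints P g ↔ a ∈ P ∧ g • a ∈ P := mem_filter

theorem card_returningPoints_le {G α : Type*} [SMul G α] [DecidableEq α] (P : Finset α) (g : G) :
    #(returningPoints P g) ≤ #P := card_filter_le _ _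

theorem card_le_card_image_add_card_filter_collision {α β : Type*} [DecidableEq α] [DecidableEq β]
    (f : α → β) (s : Finset α) :
    #s ≤ #(s.image f) + #{a ∈ s | ∃ a' ∈ s, a' ≠ a ∧ f a' = f a} := by
  rw [← card_filter_add_card_filter_not (s := s) (p := fun a ↦ ∃ a' ∈ s, a' ≠ a ∧ f a' = f a),
    add_comm]
  gcongr
  refine card_le_card_of_injOn f (fun a ha ↦ mem_image_of_mem _ (mem_filter.mp ha).1)
    fun a ha b hb hab ↦ ?_
  by_contra hne
  exact (mem_filter.mp hb).2 ⟨a, (mem_filter.mp ha).1, hne, hab⟩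

end ReturningPoints

section Coloring

variable {κ : Type*} [DecidableEq κ] {c : ℍ → κ} {P : Finset ℍ} {G : Finset SL(2, ℝ)} {T k : ℕ}

theorem sum_card_collision_le_sum_card_multiplePoints :
    ∑ g ∈ G, #{a ∈ returningPoints P g | ∃ a' ∈ returningPoints P g, a' ≠ a ∧
        (c a', c (g • a')) = (c a, c (g • a))} ≤
      ∑ e ∈ P ×ˢ P,
        #(multiplePoints Carries G {e' ∈ P ×ˢ P | Prod.map c c e' = Prod.map c c e} e) := by
  rw [← card_sigma, ← card_sigma]
  refine card_le_card_of_injOn (fun x ↦ ⟨(x.2, x.1 • x.2), x.1⟩) ?_ ?_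
  · rintro ⟨g, a⟩ hga
    obtain ⟨hg, ha⟩ := mem_sigma.mp hga
    obtain ⟨ha, a', ha', hne, hcolor⟩ := mem_filter.mp ha
    rw [mem_returningPoints] at ha ha'
    refine mem_coe.mpr (mem_sigma.mpr ⟨mk_mem_product ha.1 ha.2, mem_multiplePoints.mpr
      ⟨hg, rfl, (a', g • a'), mem_filter.mpr ⟨mk_mem_product ha'.1 ha'.2, hcolor⟩, ?_, rfl⟩⟩)
    exact fun h ↦ hne (congrArg Prod.fst h)
  · rintro ⟨g, a⟩ _ ⟨g', a'⟩ _ h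
    obtain ⟨hpair, hg⟩ := Sigma.mk.inj_iff.mp h
    obtain rfl := eq_of_heq hg
    obtain rfl := congrArg Prod.fst hpair
    rfl

theorem sum_card_multiplePoints_color_le
    (hG : Set.InjOn (MulAction.toPerm (β := ℍ)) (G : Set SL(2, ℝ)))
    (hT : ∀ a ∈ P, #{a' ∈ P | c a' = c a} ≤ T) :
    ∑ e ∈ P ×ˢ P, #(multiplePoints Carries G
        {e' ∈ P ×ˢ P | Prod.map c c e' = Prod.map c c e} e) ≤ 12 * T * #P ^ 2 := by
  set colorPair : ℍ × ℍ → κ × κ := Prod.map c c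
  have maps_to : ∀ e ∈ P ×ˢ P, colorPair e ∈ (P ×ˢ P).image colorPair :=
    fun e he ↦ mem_image_of_mem _ he
  calc ∑ e ∈ P ×ˢ P, #(multiplePoints Carries G {e' ∈ P ×ˢ P | colorPair e' = colorPair e} e)
      = ∑ q ∈ (P ×ˢ P).image colorPair, ∑ e ∈ P ×ˢ P with colorPair e = q,
          #(multiplePoints Carries G {e' ∈ P ×ˢ P | colorPair e' = q} e) := by
        rw [← sum_fiberwise_of_maps_to maps_to]
        refine sum_congr rfl fun q _ ↦ sum_congr rfl fun e he ↦ ?_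
        rw [(mem_filter.mp he).2]
    _ ≤ ∑ q ∈ (P ×ˢ P).image colorPair, 12 * T * #{e ∈ P ×ˢ P | colorPair e = q} := by
        refine sum_le_sum (forall_mem_image.mpr fun e he ↦ ?_)
        obtain ⟨he₁, he₂⟩ := mem_product.mp he
        refine (sum_card_multiplePoints_carries_le hG (A := {a ∈ P | c a = c e.1})
          (B := {b ∈ P | c b = c e.2}) fun e' he' ↦ ?_).trans
          (Nat.mul_le_mul_right _ (by linarith [hT _ he₁, hT _ he₂]))
        obtain ⟨he'P, hcolor⟩ := mem_filter.mp he'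
        obtain ⟨h₁, h₂⟩ := mem_product.mp he'P
        exact mem_product.mpr ⟨mem_filter.mpr ⟨h₁, congrArg Prod.fst hcolor⟩,
          mem_filter.mpr ⟨h₂, congrArg Prod.snd hcolor⟩⟩
    _ = 12 * T * #P ^ 2 := by
        rw [← mul_sum, ← card_eq_sum_card_fiberwise maps_to, card_product, sq]

theorem card_mul_le_of_two_mul_card_image_color_le
    (hG : Set.InjOn (MulAction.toPerm (β := ℍ)) (G : Set SL(2, ℝ)))
    (hT : ∀ a ∈ P, #{a' ∈ P | c a' = c a} ≤ T) (hk : ∀ g ∈ G, k ≤ #(returningPoints P g))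
    (hcolor : ∀ g ∈ G, 2 * #((returningPoints P g).image fun a ↦ (c a, c (g • a))) ≤ k) :
    #G * k ≤ 24 * T * #P ^ 2 := by
  have hcollision (g) (hg : g ∈ G) : k ≤ 2 * #{a ∈ returningPoints P g |
      ∃ a' ∈ returningPoints P g, a' ≠ a ∧ (c a', c (g • a')) = (c a, c (g • a))} := by
    have := card_le_card_image_add_card_filter_collision (fun a ↦ (c a, c (g • a)))
      (returningPoints P g)
    have := hk g hg
    have := hcolor g hg
    lia
  calc #G * k ≤ 2 * ∑ g ∈ G, #{a ∈ returningPoints P g |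
        ∃ a' ∈ returningPoints P g, a' ≠ a ∧ (c a', c (g • a')) = (c a, c (g • a))} := by
        rw [mul_sum, ← smul_eq_mul]
        exact card_nsmul_le_sum _ _ _ hcollision
    _ ≤ 2 * (12 * T * #P ^ 2) := Nat.mul_le_mul_left _
        (sum_card_collision_le_sum_card_multiplePoints.trans
          (sum_card_multiplePoints_color_le hG hT))
    _ = 24 * T * #P ^ 2 := by ring

end Coloring

section Rich

/-- Bounds the number of pairs of cells of a thick decomposition that a Möbius map overlays, per
cell; the constants are those of dyadic cells and of their Möbius images. -/
def overlayBound : ℝ := packingBound (1 / 16 / 128) (4 / (1 / 16)) (Module.finrank ℝ ℂ)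

theorem overlayBound_pos : 0 < overlayBound :=
  zero_lt_one.trans_le (one_le_packingBound (by norm_num) (by norm_num) _)

open Classical in
theorem card_image_cell_le {P : Finset ℍ} {S : Finset (Set ℂ)} {c : ℍ → Set ℂ}
    (hthick : ∀ C ∈ S, IsThick (1 / 16) 1 C ∧ Metric.ediam C ≠ ⊤)
    (hdisj : (S : Set (Set ℂ)).PairwiseDisjoint id) (hc : ∀ a ∈ P, c a ∈ S ∧ (a : ℂ) ∈ c a)
    (g : SL(2, ℝ)) :
    #((returningPoints P g).image fun a ↦ (c a, c (g • a))) ≤ overlayBound * (#S + #S) := by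
  have hdet : (g 0 0 : ℂ) * g 1 1 - g 0 1 * g 1 0 ≠ 0 := by
    have := g.det_coe
    rw [Matrix.det_fin_two] at this
    exact_mod_cast this ▸ one_ne_zero
  let gImage : Set ℂ → Set ℂ := mobiusImage (g 0 0) (g 0 1) (g 1 0) (g 1 1)
  have hsub : (returningPoints P g).image (fun a ↦ (c a, c (g • a))) ⊆
      {p ∈ S ×ˢ S | (gImage p.1 ∩ id p.2).Nonempty} := by
    refine image_subset_iff.mpr fun a ha ↦ ?_
    obtain ⟨ha, hga⟩ := mem_returningPoints.mp ha
    refine mem_filter.mpr ⟨mk_mem_product (hc _ ha).1 (hc _ hga).1, ↑(g • a), ?_, (hc _ hga).2⟩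
    exact ⟨a, (hc _ ha).2, UpperHalfPlane.denom_ne_zero g a,
      UpperHalfPlane.coe_specialLinearGroup_apply g a⟩
  refine le_trans (mod_cast card_le_card hsub) (card_filter_nonempty_inter_le (by norm_num)
    (by norm_num) (fun C hC D hD hne ↦ disjoint_mobiusImage hdet (hdisj hC hD hne))
    (fun C hC ↦ (hthick C hC).1.mobiusImage (by norm_num) (by norm_num) hdet) hdisj
    (fun C hC ↦ (hthick C hC).1.mono (by norm_num) (by norm_num)) fun C hC ↦ (hthick C hC).2)

theorem mul_le_nine_mul {L N T k s : ℕ} (hT : 0 < T) (hs : T * s ≤ T + 8 * N)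
    (hTk : L * N ≤ T * k) (hLk : L ≤ k) : L * s ≤ 9 * k := by
  refine Nat.le_of_mul_le_mul_left ?_ hT
  calc T * (L * s) = L * (T * s) := by ring
    _ ≤ L * (T + 8 * N) := by gcongr
    _ = T * L + 8 * (L * N) := by ring
    _ ≤ T * k + 8 * (T * k) := by gcongr
    _ = T * (9 * k) := by ring

open Classical in
theorem exists_color_two_mul_card_image_le {L : ℕ} (hL : 64 * overlayBound < L) {P : Finset ℍ}
    {k : ℕ} (hk : 0 < k) (hLk : L ≤ k) (hkP : k ≤ #P) :
    ∃ (T : ℕ) (c : ℍ → Set ℂ), T * k ≤ 2 * L * #P ∧ (∀ a ∈ P, #{a' ∈ P | c a' = c a} ≤ T) ∧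
      ∀ g : SL(2, ℝ), 2 * #((returningPoints P g).image fun a ↦ (c a, c (g • a))) ≤ k := by
  have hL_pos : 0 < L := by
    have := overlayBound_pos
    exact_mod_cast (by linarith : (0 : ℝ) < L)
  set T := L * #P / k + 1
  have hT_pos : 0 < T := Nat.succ_pos _
  have hT_lower : L * #P ≤ T * k := by
    rw [mul_comm T]
    exact (Nat.lt_mul_div_succ _ hk).le
  have hT_upper : T * k ≤ 2 * L * #P := by
    have := Nat.div_mul_le_self (L * #P) k
    have : k ≤ L * #P := hkP.trans (Nat.le_mul_of_pos_left _ hL_pos)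
    have : T * k = L * #P / k * k + k := add_one_mul _ _
    linarith
  obtain ⟨S, hS, hcard⟩ := exists_isCellDecomposition_isThick hT_pos (P.image (↑· : ℍ → ℂ))
  have exists_cell (a : ℍ) (ha : a ∈ P) : ∃ C ∈ S, (a : ℂ) ∈ C :=
    hS.exists_mem a (mem_image_of_mem _ ha)
  choose! c hc using exists_cell
  refine ⟨T, c, hT_upper, fun a ha ↦ ?_, fun g ↦ ?_⟩
  · rw [← card_image_of_injective _ UpperHalfPlane.coe_injective]
    refine hS.card_le (c a) (hc a ha).1 _ (image_subset_image (filter_subset _ _)) ?_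
    refine forall_mem_image.mpr fun a' ha' ↦ ?_
    obtain ⟨ha'P, hcolor⟩ := mem_filter.mp ha'
    exact hcolor ▸ (hc a' ha'P).2
  · rw [card_image_of_injective _ UpperHalfPlane.coe_injective] at hcard
    have hLS : (L * #S : ℝ) ≤ 9 * k := mod_cast mul_le_nine_mul hT_pos hcard hT_lower hLk
    have hpairs := card_image_cell_le hS.isCell hS.pairwiseDisjoint hc g
    have hbound : 64 * overlayBound * #S ≤ L * #S := by gcongr
    exact_mod_cast (by linarith :
      (2 : ℝ) * #((returningPoints P g).image fun a ↦ (c a, c (g • a))) ≤ k)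

theorem exists_card_rich_mul_sq_le : ∃ K : ℕ, ∀ (P : Finset ℍ) (G : Finset SL(2, ℝ)) (k : ℕ),
    2 ≤ k → Set.InjOn (MulAction.toPerm (β := ℍ)) (G : Set SL(2, ℝ)) →
    (∀ g ∈ G, k ≤ #(returningPoints P g)) → #G * k ^ 2 ≤ K * #P ^ 3 := by
  obtain ⟨L, hL⟩ := exists_nat_gt (64 * overlayBound)
  refine ⟨48 * L, fun P G k hk hG hrich ↦ ?_⟩
  rcases G.eq_empty_or_nonempty with rfl | ⟨g, hg⟩
  · simp
  rcases Nat.lt_or_ge k L with hkL | hLk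
  · have hmul : #G * k ≤ 24 * #P * #P ^ 2 :=
      card_mul_le_of_two_mul_card_image_color_le (c := fun _ ↦ ()) hG
        (fun a _ ↦ card_filter_le _ _) hrich fun g _ ↦
          (Nat.mul_le_mul_left 2 (card_le_one_of_subsingleton _)).trans hk
    calc #G * k ^ 2 = #G * k * k := by ring
      _ ≤ 24 * #P * #P ^ 2 * L := Nat.mul_le_mul hmul hkL.le
      _ ≤ 48 * L * #P ^ 3 := by ring_nf; lia
  · obtain ⟨T, c, hTk, hT, hcolor⟩ := exists_color_two_mul_card_image_le hL (by lia) hLk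
      ((hrich g hg).trans (card_returningPoints_le P g))
    have hmul := card_mul_le_of_two_mul_card_image_color_le hG hT hrich fun g _ ↦ hcolor g
    calc #G * k ^ 2 = #G * k * k := by ring
      _ ≤ 24 * T * #P ^ 2 * k := Nat.mul_le_mul_right _ hmul
      _ = 24 * #P ^ 2 * (T * k) := by ring
      _ ≤ 24 * #P ^ 2 * (2 * L * #P) := Nat.mul_le_mul_left _ hTk
      _ = 48 * L * #P ^ 3 := by ring

end Rich

/-! ### Two-point homogeneity -/

section Homogeneity

/-- The rotation matrix with angle `θ`; it acts on `ℍ` as the hyperbolic rotation about `I` by the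
angle `2θ`. -/
def rotationMatrix (θ : ℝ) : SL(2, ℝ) :=
  ⟨!![Real.cos θ, Real.sin θ; -Real.sin θ, Real.cos θ], by
    rw [Matrix.det_fin_two_of]
    linear_combination Real.sin_sq_add_cos_sq θ⟩

theorem coe_rotationMatrix_smul (θ : ℝ) (w : ℍ) : ((rotationMatrix θ • w : ℍ) : ℂ) =
    (Real.cos θ * w + Real.sin θ) / (-Real.sin θ * w + Real.cos θ) := by
  rw [UpperHalfPlane.coe_specialLinearGroup_apply]
  simp [rotationMatrix]

theorem rotationMatrix_smul_I (θ : ℝ) : rotationMatrix θ • UpperHalfPlane.I = UpperHalfPlane.I := by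
  apply UpperHalfPlane.ext
  have hden : (rotationMatrix θ 1 0 * UpperHalfPlane.I + rotationMatrix θ 1 1 : ℂ) ≠ 0 :=
    UpperHalfPlane.denom_ne_zero (rotationMatrix θ) UpperHalfPlane.I
  refine mul_right_cancel₀ hden ((coe_smul_mul_denom _ _).trans ?_)
  apply Complex.ext <;> simp [rotationMatrix]

theorem rotationMatrix_pi_div_two_smul_of_re_eq_zero {u v : ℍ} (hu : u.re = 0) (hv : v.re = 0)
    (him : u.im = v.im⁻¹) : rotationMatrix (Real.pi / 2) • u = v := by
  have hv_pos := v.im_pos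
  apply UpperHalfPlane.ext
  rw [coe_rotationMatrix_smul, div_eq_iff (by simp [u.ne_zero])]
  apply Complex.ext <;> simp [hu, hv, him, hv_pos.ne']

theorem rotationMatrix_smul_re_eq_zero {θ : ℝ} {w : ℍ}
    (h : Real.cos θ * Real.sin θ * (1 - w.re ^ 2 - w.im ^ 2) +
      (Real.cos θ ^ 2 - Real.sin θ ^ 2) * w.re = 0) : (rotationMatrix θ • w).re = 0 := by
  rw [← UpperHalfPlane.coe_re, coe_rotationMatrix_smul, Complex.div_re, ← add_div]
  refine div_eq_zero_iff.mpr (Or.inl ?_)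
  simp only [Complex.add_re, Complex.add_im, Complex.mul_re, Complex.mul_im, Complex.neg_re,
    Complex.neg_im, Complex.ofReal_re, Complex.ofReal_im, UpperHalfPlane.coe_re,
    UpperHalfPlane.coe_im]
  linear_combination h

theorem exists_rotationMatrix_smul_re_eq_zero (w : ℍ) : ∃ θ, (rotationMatrix θ • w).re = 0 := by
  let F (θ : ℝ) : ℝ := Real.cos θ * Real.sin θ * (1 - w.re ^ 2 - w.im ^ 2) +
    (Real.cos θ ^ 2 - Real.sin θ ^ 2) * w.re
  have hF : Continuous F := by fun_prop
  have hF_zero : F 0 = w.re := by simp [F]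
  have hF_pi_div_two : F (Real.pi / 2) = -w.re := by simp [F]
  have hzero : (0 : ℝ) ∈ Set.uIcc (F 0) (F (Real.pi / 2)) := by
    rw [hF_zero, hF_pi_div_two, Set.mem_uIcc]
    rcases le_total w.re 0 with h | h
    · exact Or.inl ⟨h, by linarith⟩
    · exact Or.inr ⟨by linarith, h⟩
  obtain ⟨θ, -, hθ⟩ := intermediate_value_uIcc hF.continuousOn hzero
  exact ⟨θ, rotationMatrix_smul_re_eq_zero hθ⟩

theorem exists_smul_I_eq_and_smul_eq_of_re_eq_zero {u v : ℍ} (hu : u.re = 0) (hv : v.re = 0)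
    (h : dist UpperHalfPlane.I u = dist UpperHalfPlane.I v) :
    ∃ g : SL(2, ℝ), g • UpperHalfPlane.I = UpperHalfPlane.I ∧ g • u = v := by
  rw [UpperHalfPlane.dist_of_re_eq (by simp [hu]), UpperHalfPlane.dist_of_re_eq (by simp [hv])] at h
  have habs : |Real.log u.im| = |Real.log v.im| := by simpa [Real.dist_eq] using h
  rcases abs_eq_abs.mp habs with hlog | hlog
  · have him : u.im = v.im := Real.log_injOn_pos u.im_pos v.im_pos hlog
    exact ⟨1, one_smul _ _, by rw [one_smul, UpperHalfPlane.ext_re_im (hu.trans hv.symm) him]⟩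
  · rw [← Real.log_inv] at hlog
    have him : u.im = v.im⁻¹ := Real.log_injOn_pos u.im_pos (inv_pos.mpr v.im_pos) hlog
    exact ⟨_, rotationMatrix_smul_I _, rotationMatrix_pi_div_two_smul_of_re_eq_zero hu hv him⟩

theorem exists_smul_I_eq_and_smul_eq {w w' : ℍ}
    (h : dist UpperHalfPlane.I w = dist UpperHalfPlane.I w') :
    ∃ g : SL(2, ℝ), g • UpperHalfPlane.I = UpperHalfPlane.I ∧ g • w = w' := by
  obtain ⟨θ, hθ⟩ := exists_rotationMatrix_smul_re_eq_zero w
  obtain ⟨θ', hθ'⟩ := exists_rotationMatrix_smul_re_eq_zero w'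
  have hdist (θ : ℝ) (w : ℍ) :
      dist UpperHalfPlane.I (rotationMatrix θ • w) = dist UpperHalfPlane.I w := by
    simpa only [rotationMatrix_smul_I] using dist_smul (rotationMatrix θ) UpperHalfPlane.I w
  obtain ⟨g, hgI, hg⟩ := exists_smul_I_eq_and_smul_eq_of_re_eq_zero hθ hθ'
    (by rw [hdist, hdist, h])
  refine ⟨(rotationMatrix θ')⁻¹ * g * rotationMatrix θ, ?_, ?_⟩
  · rw [mul_smul, mul_smul, rotationMatrix_smul_I, hgI, inv_smul_eq_iff, rotationMatrix_smul_I]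
  · rw [mul_smul, mul_smul, hg, inv_smul_smul]

theorem exists_smul_eq_and_smul_eq {a a' b b' : ℍ} (h : dist a a' = dist b b') :
    ∃ g : SL(2, ℝ), g • a = b ∧ g • a' = b' := by
  obtain ⟨u, hu⟩ := MulAction.exists_smul_eq SL(2, ℝ) a UpperHalfPlane.I
  obtain ⟨v, hv⟩ := MulAction.exists_smul_eq SL(2, ℝ) b UpperHalfPlane.I
  have hdist : dist UpperHalfPlane.I (u • a') = dist UpperHalfPlane.I (v • b') := by
    rw [← hu, dist_smul, h, ← dist_smul v, hv, hu]
  obtain ⟨g, hgI, hg⟩ := exists_smul_I_eq_and_smul_eq hdist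
  refine ⟨v⁻¹ * g * u, ?_, ?_⟩
  · rw [mul_smul, mul_smul, hu, hgI, inv_smul_eq_iff, hv]
  · rw [mul_smul, mul_smul, hg, inv_smul_smul]

end Homogeneity

/-! ### Distance energy -/

section WeakTypeSum

theorem sum_inv_Icc_two_le_log {N : ℕ} (hN : 1 ≤ N) :
    ∑ k ∈ Icc 2 N, (k : ℝ)⁻¹ ≤ Real.log N := by
  have hharmonic := harmonic_le_one_add_log N
  rw [harmonic_eq_sum_Icc, ← insert_Icc_add_one_left_eq_Icc hN, sum_insert (by simp)] at hharmonic
  push_cast at hharmonic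
  norm_num at hharmonic
  linarith

theorem sq_le_sum_Icc_two_four_mul {m : ℕ} (hm : 2 ≤ m) : m ^ 2 ≤ ∑ k ∈ Icc 2 m, 4 * k := by
  induction m, hm using Nat.le_induction with
  | base => simp
  | succ n hn ih =>
    rw [sum_Icc_succ_top (by lia)]
    linarith [ih, add_sq n 1]

theorem sum_sq_le_mul_log_of_card_mul_sq_le {ι : Type*} {s : Finset ι} {m : ι → ℕ} {N : ℕ} {A : ℝ}
    (hN : 1 ≤ N) (hm : ∀ i ∈ s, 2 ≤ m i ∧ m i ≤ N)
    (hA : ∀ k, 2 ≤ k → (#{i ∈ s | k ≤ m i} : ℝ) * k ^ 2 ≤ A) :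
    ∑ i ∈ s, (m i : ℝ) ^ 2 ≤ 4 * A * Real.log N := by
  have hA_nonneg : 0 ≤ A := le_trans (by positivity) (hA 2 le_rfl)
  calc ∑ i ∈ s, (m i : ℝ) ^ 2
      ≤ ∑ i ∈ s, ∑ k ∈ Icc 2 (m i), 4 * (k : ℝ) :=
        sum_le_sum fun i hi ↦ mod_cast sq_le_sum_Icc_two_four_mul (hm i hi).1
    _ = ∑ k ∈ Icc 2 N, ∑ i ∈ s with k ≤ m i, 4 * (k : ℝ) :=
        sum_comm' fun i k ↦ by
          simp only [mem_Icc, mem_filter]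
          exact ⟨fun h ↦ ⟨⟨h.1, h.2.2⟩, h.2.1, h.2.2.trans (hm i h.1).2⟩,
            fun h ↦ ⟨h.1.1, h.2.1, h.1.2⟩⟩
    _ ≤ ∑ k ∈ Icc 2 N, 4 * A * (k : ℝ)⁻¹ := by
        refine sum_le_sum fun k hk ↦ ?_
        have hk_two := (mem_Icc.mp hk).1
        have hk_pos : (0 : ℝ) < k := by positivity
        rw [sum_const, nsmul_eq_mul, ← div_eq_mul_inv, le_div_iff₀ hk_pos]
        linarith [hA k hk_two]
    _ = 4 * A * ∑ k ∈ Icc 2 N, (k : ℝ)⁻¹ := (mul_sum _ _ _).symm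
    _ ≤ 4 * A * Real.log N := by gcongr; exact sum_inv_Icc_two_le_log hN

end WeakTypeSum

section Energy

/-- The pairs of pairs of points of `P` spanning the same distance; their number is the distance
energy of `P`. -/
def equidistantQuadruples {α : Type*} [Dist α] (P : Finset α) : Finset ((α × α) × (α × α)) :=
  {q ∈ (P ×ˢ P) ×ˢ (P ×ˢ P) | dist q.1.1 q.1.2 = dist q.2.1 q.2.2}

theorem mem_equidistantQuadruples {α : Type*} [Dist α] {P : Finset α}
    {q : (α × α) × (α × α)} : q ∈ equidistantQuadruples P ↔
      ((q.1.1 ∈ P ∧ q.1.2 ∈ P) ∧ q.2.1 ∈ P ∧ q.2.2 ∈ P) ∧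
        dist q.1.1 q.1.2 = dist q.2.1 q.2.2 := by
  simp only [equidistantQuadruples, mem_filter, mem_product]

theorem card_equidistantQuadruples_filter_fst_eq_le {α : Type*} [MetricSpace α] [DecidableEq α]
    (P : Finset α) : #{q ∈ equidistantQuadruples P | q.1.1 = q.1.2} ≤ #P ^ 2 := by
  have hsubset : {q ∈ equidistantQuadruples P | q.1.1 = q.1.2} ⊆
      (P ×ˢ P).image fun p ↦ ((p.1, p.1), (p.2, p.2)) := by
    rintro ⟨⟨a, a'⟩, ⟨b, b'⟩⟩ hq
    obtain ⟨hquad, rfl : a = a'⟩ := mem_filter.mp hq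
    obtain ⟨⟨⟨ha, -⟩, hb, -⟩, hdist⟩ := mem_equidistantQuadruples.mp hquad
    obtain rfl : b = b' := dist_eq_zero.mp (hdist.symm.trans (dist_self a))
    exact mem_image.mpr ⟨(a, b), mem_product.mpr ⟨ha, hb⟩, rfl⟩
  calc #{q ∈ equidistantQuadruples P | q.1.1 = q.1.2}
      ≤ #((P ×ˢ P).image fun p ↦ ((p.1, p.1), (p.2, p.2))) := card_le_card hsubset
    _ ≤ #(P ×ˢ P) := card_image_le
    _ = #P ^ 2 := by rw [card_product, sq]

theorem card_le_sum_card_returningPoints_sq {G α : Type*} [SMul G α] [DecidableEq α]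
    {P : Finset α} {Q : Finset ((α × α) × (α × α))} (S : Finset G)
    (hQP : Q ⊆ (P ×ˢ P) ×ˢ (P ×ˢ P))
    (hQS : ∀ q ∈ Q, ∃ g ∈ S, g • q.1.1 = q.2.1 ∧ g • q.1.2 = q.2.2) :
    #Q ≤ ∑ g ∈ S, #(returningPoints P g) ^ 2 := by
  have hsubset : Q ⊆ S.biUnion fun g ↦
      (returningPoints P g ×ˢ returningPoints P g).image fun p ↦ (p, (g • p.1, g • p.2)) := by
    rintro ⟨⟨a, a'⟩, ⟨b, b'⟩⟩ hq
    obtain ⟨g, hg, rfl : g • a = b, rfl : g • a' = b'⟩ := hQS _ hq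
    have hP := hQP hq
    simp only [mem_product] at hP
    refine mem_biUnion.mpr ⟨g, hg, mem_image.mpr ⟨(a, a'), mem_product.mpr ?_, rfl⟩⟩
    exact ⟨mem_returningPoints.mpr ⟨hP.1.1, hP.2.1⟩, mem_returningPoints.mpr ⟨hP.1.2, hP.2.2⟩⟩
  refine (card_le_card hsubset).trans (card_biUnion_le.trans (sum_le_sum fun g _ ↦ ?_))
  exact card_image_le.trans_eq (by rw [card_product, sq])

theorem exists_injOn_toPerm_forall_smul_eq (Q : Finset ((ℍ × ℍ) × (ℍ × ℍ)))
    (hQ : ∀ q ∈ Q, dist q.1.1 q.1.2 = dist q.2.1 q.2.2) :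
    ∃ S : Finset SL(2, ℝ), Set.InjOn (MulAction.toPerm (β := ℍ)) (S : Set SL(2, ℝ)) ∧
      ∀ q ∈ Q, ∃ g ∈ S, g • q.1.1 = q.2.1 ∧ g • q.1.2 = q.2.2 := by
  classical
  choose! f hf using fun q hq ↦ exists_smul_eq_and_smul_eq (hQ q hq)
  have hsurj : Set.SurjOn (MulAction.toPerm (β := ℍ)) (Set.range f)
      (Q.image fun q ↦ MulAction.toPerm (f q) : Finset (Equiv.Perm ℍ)) := by
    intro σ hσ
    obtain ⟨q, -, rfl⟩ := mem_image.mp (mem_coe.mp hσ)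
    exact ⟨f q, ⟨q, rfl⟩, rfl⟩
  obtain ⟨S, -, hS, himage⟩ := exists_subset_injOn_image_eq_of_surjOn _ _ hsurj
  refine ⟨S, hS, fun q hq ↦ ?_⟩
  obtain ⟨g, hg, hperm⟩ := mem_image.mp (himage.symm ▸ mem_image_of_mem _ hq)
  have hsmul (z : ℍ) : g • z = f q • z := congrArg (· z) hperm
  exact ⟨g, hg, (hsmul _).trans (hf q hq).1, (hsmul _).trans (hf q hq).2⟩

theorem exists_card_equidistantQuadruples_filter_fst_ne_le : ∃ K : ℕ, ∀ P : Finset ℍ, P.Nonempty →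
    (#{q ∈ equidistantQuadruples P | q.1.1 ≠ q.1.2} : ℝ) ≤ K * #P ^ 3 * Real.log #P := by
  classical
  obtain ⟨K, hK⟩ := exists_card_rich_mul_sq_le
  refine ⟨4 * K, fun P hP ↦ ?_⟩
  set Q := {q ∈ equidistantQuadruples P | q.1.1 ≠ q.1.2}
  have hQ (q) (hq : q ∈ Q) := mem_equidistantQuadruples.mp (mem_filter.mp hq).1
  obtain ⟨S, hS, hQS⟩ := exists_injOn_toPerm_forall_smul_eq Q fun q hq ↦ (hQ q hq).2
  set R : Finset SL(2, ℝ) := {g ∈ S | 2 ≤ #(returningPoints P g)}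
  have hQR (q) (hq : q ∈ Q) : ∃ g ∈ R, g • q.1.1 = q.2.1 ∧ g • q.1.2 = q.2.2 := by
    obtain ⟨g, hg, hb, hb'⟩ := hQS q hq
    obtain ⟨⟨⟨ha, ha'⟩, hbP, hbP'⟩, -⟩ := hQ q hq
    have hrich : 1 < #(returningPoints P g) := one_lt_card.mpr
      ⟨q.1.1, mem_returningPoints.mpr ⟨ha, hb ▸ hbP⟩,
        q.1.2, mem_returningPoints.mpr ⟨ha', hb' ▸ hbP'⟩, (mem_filter.mp hq).2⟩
    exact ⟨g, mem_filter.mpr ⟨hg, hrich⟩, hb, hb'⟩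
  have hweak (k : ℕ) (hk : 2 ≤ k) :
      (#{g ∈ R | k ≤ #(returningPoints P g)} : ℝ) * k ^ 2 ≤ K * #P ^ 3 := by
    refine mod_cast hK P _ k hk (hS.mono ?_) fun g hg ↦ (mem_filter.mp hg).2
    exact coe_subset.mpr ((filter_subset _ _).trans (filter_subset _ _))
  calc (#Q : ℝ) ≤ ∑ g ∈ R, (#(returningPoints P g) : ℝ) ^ 2 :=
        mod_cast card_le_sum_card_returningPoints_sq R
          ((filter_subset _ _).trans (filter_subset _ _)) hQR
    _ ≤ 4 * (K * #P ^ 3) * Real.log #P := sum_sq_le_mul_log_of_card_mul_sq_le hP.card_pos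
        (fun g hg ↦ ⟨(mem_filter.mp hg).2, card_returningPoints_le P g⟩) hweak
    _ = (4 * K : ℕ) * #P ^ 3 * Real.log #P := by push_cast; ring

theorem sq_le_pow_three_mul_log {x : ℝ} (hx : 2 ≤ x) : x ^ 2 ≤ x ^ 3 * Real.log x := by
  have hlog : Real.log 2 ≤ Real.log x := Real.log_le_log (by norm_num) hx
  have hone : 1 ≤ x * Real.log x := by nlinarith [Real.log_two_gt_d9]
  calc x ^ 2 = x ^ 2 * 1 := (mul_one _).symm
    _ ≤ x ^ 2 * (x * Real.log x) := by gcongr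
    _ = x ^ 3 * Real.log x := by ring

theorem exists_card_equidistantQuadruples_le : ∃ C : ℝ, 0 < C ∧ ∀ P : Finset ℍ, 2 ≤ #P →
    (#(equidistantQuadruples P) : ℝ) ≤ C * #P ^ 3 * Real.log #P := by
  obtain ⟨K, hK⟩ := exists_card_equidistantQuadruples_filter_fst_ne_le
  refine ⟨K + 1, by positivity, fun P hP ↦ ?_⟩
  have hdegenerate : (#{q ∈ equidistantQuadruples P | q.1.1 = q.1.2} : ℝ) ≤ #P ^ 2 :=
    mod_cast card_equidistantQuadruples_filter_fst_eq_le P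
  have hsplit : (#(equidistantQuadruples P) : ℝ) =
      #{q ∈ equidistantQuadruples P | q.1.1 = q.1.2} +
        #{q ∈ equidistantQuadruples P | q.1.1 ≠ q.1.2} :=
    mod_cast (card_filter_add_card_filter_not _).symm
  linarith [hK P (card_pos.mp (by lia)), sq_le_pow_three_mul_log (x := #P) (mod_cast hP)]

end Energy

section CauchySchwarz

theorem sum_card_fiber_sq {ι β : Type*} [DecidableEq β] (s : Finset ι) (d : ι → β) :
    ∑ t ∈ s.image d, #{x ∈ s | d x = t} ^ 2 = #{p ∈ s ×ˢ s | d p.1 = d p.2} := by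
  have hmaps (p) (hp : p ∈ ({p ∈ s ×ˢ s | d p.1 = d p.2} : Finset (ι × ι))) :
      d p.1 ∈ s.image d :=
    mem_image_of_mem d (mem_product.mp (mem_filter.mp hp).1).1
  rw [card_eq_sum_card_fiberwise hmaps]
  refine sum_congr rfl fun t _ ↦ ?_
  rw [sq, ← card_product, ← filter_product, filter_filter]
  exact congrArg card (filter_congr fun p _ ↦
    ⟨fun h ↦ ⟨h.1.trans h.2.symm, h.1⟩, fun h ↦ ⟨h.2, h.1.symm.trans h.2⟩⟩)

theorem card_sq_le_card_image_mul_card_filter {ι β : Type*} [DecidableEq β] (s : Finset ι)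
    (d : ι → β) : #s ^ 2 ≤ #(s.image d) * #{p ∈ s ×ˢ s | d p.1 = d p.2} := by
  rw [← sum_card_fiber_sq,
    card_eq_sum_card_fiberwise (f := d) (t := s.image d) fun x hx ↦ mem_image_of_mem d hx]
  exact sq_sum_le_card_mul_sum_sq

theorem card_sq_le_card_image_mul_card_equidistantQuadruples {ι α : Type*} [Dist α]
    {s : Finset ι} {P : Finset α} {d : ι → ℝ} {f : ι → α × α} (hf : Set.InjOn f s)
    (hfP : ∀ x ∈ s, f x ∈ P ×ˢ P) (hd : ∀ x ∈ s, d x = dist (f x).1 (f x).2) :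
    #s ^ 2 ≤ #(s.image d) * #(equidistantQuadruples P) := by
  refine (card_sq_le_card_image_mul_card_filter s d).trans (Nat.mul_le_mul_left _ ?_)
  refine card_le_card_of_injOn (Prod.map f f) ?_ ?_
  · rintro ⟨x, y⟩ hxy
    obtain ⟨hmem, heq⟩ := mem_filter.mp hxy
    obtain ⟨hx, hy⟩ := mem_product.mp hmem
    exact mem_filter.mpr
      ⟨mem_product.mpr ⟨hfP x hx, hfP y hy⟩, (hd x hx).symm.trans (heq.trans (hd y hy))⟩
  · refine (hf.prodMap hf).mono fun p hp ↦ ?_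
    exact mem_product.mp (mem_filter.mp hp).1

end CauchySchwarz

section QuotientDistance

theorem quotDist_eq_zero_of_smul_eq_smul {Γ : Subgroup SL(2, ℝ)} {g g' : SL(2, ℝ)} (hg : g ∈ Γ)
    (hg' : g' ∈ Γ) {p q : ℍ} (h : g • p = g' • q) : quotDist Γ p q = 0 := by
  refine le_antisymm ?_ (Real.iInf_nonneg fun _ ↦ dist_nonneg)
  have hbdd : BddBelow (Set.range fun γ : Γ ↦ dist p ((γ : SL(2, ℝ)) • q)) :=
    ⟨0, Set.forall_mem_range.mpr fun _ ↦ dist_nonneg⟩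
  calc quotDist Γ p q ≤ dist p ((g⁻¹ * g') • q) :=
        ciInf_le hbdd ⟨g⁻¹ * g', Γ.mul_mem (Γ.inv_mem hg) hg'⟩
    _ = 0 := by rw [mul_smul, ← h, inv_smul_smul, dist_self]

open scoped Pointwise in
theorem exists_card_mul_sq_le_ncard_mul_card_equidistantQuadruples {Γ : Subgroup SL(2, ℝ)}
    {P₁ P₂ : Finset ℍ} {Γ₀ : Finset SL(2, ℝ)} (hne : Γ₀.Nonempty)
    (hsub : (Γ₀ : Set SL(2, ℝ)) ⊆ Γ)
    (hsep : ∀ p ∈ P₂, ∀ q ∈ P₂, p ≠ q → quotDist Γ p q ≠ 0)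
    (hcover : ∀ p ∈ P₁, ∀ q ∈ P₂, quotDist Γ p q = Γ₀.inf' hne fun γ ↦ dist p (γ • q)) :
    ∃ P : Finset ℍ, #(P₁ ∪ P₂) ≤ #P ∧ #P ≤ 2 * #Γ₀ * #(P₁ ∪ P₂) ∧
      (#P₁ * #P₂) ^ 2 ≤ {t : ℝ | ∃ p₁ ∈ P₁, ∃ p₂ ∈ P₂, quotDist Γ p₁ p₂ = t}.ncard *
        #(equidistantQuadruples P) := by
  have exists_attaining (x : ℍ × ℍ) (hx : x ∈ P₁ ×ˢ P₂) :
      ∃ γ ∈ Γ₀, quotDist Γ x.1 x.2 = dist x.1 (γ • x.2) := by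
    obtain ⟨h₁, h₂⟩ := mem_product.mp hx
    obtain ⟨γ, hγ, hinf⟩ := exists_mem_eq_inf' hne fun γ ↦ dist x.1 (γ • x.2)
    exact ⟨γ, hγ, (hcover _ h₁ _ h₂).trans hinf⟩
  choose! γ hγ hdist using exists_attaining
  refine ⟨P₁ ∪ P₂ ∪ Γ₀ • P₂, card_le_card subset_union_left, ?_, ?_⟩
  · have hunion := card_union_le (P₁ ∪ P₂) (Γ₀ • P₂)
    have hsmul : #(Γ₀ • P₂) ≤ #Γ₀ * #P₂ := card_smul_le
    have hP₂ : #P₂ ≤ #(P₁ ∪ P₂) := card_le_card subset_union_right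
    nlinarith [hne.card_pos]
  · have hset : {t : ℝ | ∃ p₁ ∈ P₁, ∃ p₂ ∈ P₂, quotDist Γ p₁ p₂ = t} =
        ((P₁ ×ˢ P₂).image fun x ↦ quotDist Γ x.1 x.2 : Finset ℝ) := by
      ext t
      simp
    rw [hset, Set.ncard_coe_finset, ← card_product]
    refine card_sq_le_card_image_mul_card_equidistantQuadruples (f := fun x ↦ (x.1, γ x • x.2))
      (fun x hx y hy hxy ↦ ?_) (fun x hx ↦ ?_) hdist
    · obtain ⟨h₁, h₂⟩ := Prod.mk.inj hxy
      refine Prod.ext h₁ (not_imp_not.mp (hsep _ (mem_product.mp hx).2 _ (mem_product.mp hy).2) ?_)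
      exact quotDist_eq_zero_of_smul_eq_smul (hsub (hγ x hx)) (hsub (hγ y hy)) h₂
    · obtain ⟨h₁, h₂⟩ := mem_product.mp hx
      exact mem_product.mpr ⟨mem_union_left _ (mem_union_left _ h₁),
        mem_union_right _ (smul_mem_smul (hγ x hx) h₂)⟩

theorem pow_three_mul_log_le {K n N : ℝ} (hKn : 2 ≤ K * n) (hN : 1 ≤ N) (hNKn : N ≤ 2 * K * n) :
    N ^ 3 * Real.log N ≤ 16 * (K ^ 3 * (n ^ 3 * Real.log (K * n))) := by
  have hlog : Real.log N ≤ 2 * Real.log (K * n) := by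
    rw [← Nat.cast_ofNat, ← Real.log_pow]
    exact Real.log_le_log (by linarith) (by nlinarith)
  calc N ^ 3 * Real.log N ≤ (2 * K * n) ^ 3 * (2 * Real.log (K * n)) := by
        have hlog_nonneg := Real.log_nonneg hN
        have hKn_nonneg : 0 ≤ 2 * K * n := by linarith
        gcongr
    _ = 16 * (K ^ 3 * (n ^ 3 * Real.log (K * n))) := by ring

end QuotientDistance

/-- There is an absolute constant `c > 0` such that for any subgroup `Γ ≤ SL(2,ℝ)`,
finite sets `P₁, P₂ ⊆ ℍ²` whose points project to distinct points of the quotient,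
and a geodesic cover `Γ₀ ⊆ Γ` of cardinality `K ≥ 1` for `P₁ ∪ P₂`, the number of
distinct cross distances is at least
`(c/K³) · |P₁|² · |P₂|² / (n³ · log(K·n))` where `n = |P₁ ∪ P₂| ≥ 2`. -/
theorem distinct_cross_distances :
    ∃ c : ℝ, 0 < c ∧
      ∀ (Γ : Subgroup SL(2, ℝ)) (P₁ P₂ : Finset ℍ) (Γ₀ : Finset SL(2, ℝ))
        (hne : Γ₀.Nonempty),
        (↑Γ₀ : Set SL(2, ℝ)) ⊆ (↑Γ : Set SL(2, ℝ)) →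
        2 ≤ (P₁ ∪ P₂).card →
        (∀ p ∈ P₁ ∪ P₂, ∀ q ∈ P₁ ∪ P₂, p ≠ q → quotDist Γ p q ≠ 0) →
        (∀ p ∈ P₁ ∪ P₂, ∀ q ∈ P₁ ∪ P₂,
          quotDist Γ p q = Γ₀.inf' hne fun γ => dist p (γ • q)) →
        c / (Γ₀.card : ℝ) ^ 3 *
            ((P₁.card : ℝ) ^ 2 * (P₂.card : ℝ) ^ 2) /
            (((P₁ ∪ P₂).card : ℝ) ^ 3 *
              Real.log ((Γ₀.card : ℝ) * ((P₁ ∪ P₂).card : ℝ))) ≤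
          ({t : ℝ | ∃ p₁ ∈ P₁, ∃ p₂ ∈ P₂, quotDist Γ p₁ p₂ = t}.ncard : ℝ) := by
  obtain ⟨C, hC, henergy⟩ := exists_card_equidistantQuadruples_le
  refine ⟨1 / (16 * C), by positivity, fun Γ P₁ P₂ Γ₀ hne hsub hn hsep hcover ↦ ?_⟩
  obtain ⟨P, hlower, hupper, hcauchy⟩ :=
    exists_card_mul_sq_le_ncard_mul_card_equidistantQuadruples hne hsub
      (fun p hp q hq ↦ hsep p (mem_union_right _ hp) q (mem_union_right _ hq))
      (fun p hp q hq ↦ hcover p (mem_union_left _ hp) q (mem_union_right _ hq))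
  have hK_pos : (0 : ℝ) < #Γ₀ := mod_cast hne.card_pos
  have hn_pos : (0 : ℝ) < #(P₁ ∪ P₂) := mod_cast (by lia)
  have hKn : (2 : ℝ) ≤ #Γ₀ * #(P₁ ∪ P₂) := mod_cast hn.trans (Nat.le_mul_of_pos_left _ hne.card_pos)
  have hlog_pos : 0 < Real.log (#Γ₀ * #(P₁ ∪ P₂)) := Real.log_pos (by linarith)
  have hgrowth := pow_three_mul_log_le (N := #P) hKn (mod_cast (by lia)) (mod_cast hupper)
  set D := {t : ℝ | ∃ p₁ ∈ P₁, ∃ p₂ ∈ P₂, quotDist Γ p₁ p₂ = t}.ncard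
  have hmain : ((#P₁ : ℝ) * #P₂) ^ 2 ≤
      D * (16 * C * #Γ₀ ^ 3 * (#(P₁ ∪ P₂) ^ 3 * Real.log (#Γ₀ * #(P₁ ∪ P₂)))) :=
    calc ((#P₁ : ℝ) * #P₂) ^ 2 ≤ D * #(equidistantQuadruples P) := mod_cast hcauchy
      _ ≤ D * (C * #P ^ 3 * Real.log #P) := by gcongr; exact henergy P (hn.trans hlower)
      _ = D * (C * (#P ^ 3 * Real.log #P)) := by ring
      _ ≤ D * (C * (16 * (#Γ₀ ^ 3 * (#(P₁ ∪ P₂) ^ 3 * Real.log (#Γ₀ * #(P₁ ∪ P₂)))))) := by gcongr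
      _ = _ := by ring
  refine le_trans (le_of_eq ?_) (div_le_of_le_mul₀ (by positivity) (by positivity) hmain)
  field

end
end

section
/- Let Γ ≤ SL(2,ℝ) be a subgroup and r > 0 be such that d(i, γ·i) ≥ 2r for every γ ∈ Γ with γ ≠ I and γ ≠ −I. Then for every R ≥ √2, the set {γ ∈ Γ : a² + b² + c² + d² ≤ R², where γ = (a b; c d)} is finite and has cardinality at most 2·(cosh(Q + r) − 1)/(cosh r − 1), where Q = arcosh(R²/2). -/
open scoped UpperHalfPlane MatrixGroups

noncomputable section

/-- The inverse hyperbolic cosine, `arcosh x = log (x + √(x² − 1))`. -/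
def arcosh (x : ℝ) : ℝ :=
  Real.log (x + Real.sqrt (x ^ 2 - 1))

/-- The set of elements of `Γ` whose squared Hilbert–Schmidt norm
`a² + b² + c² + d²` is at most `R²`. -/
def latticeBall (Γ : Subgroup SL(2, ℝ)) (R : ℝ) : Set SL(2, ℝ) :=
  {γ | γ ∈ Γ ∧
    (γ.1 0 0) ^ 2 + (γ.1 0 1) ^ 2 + (γ.1 1 0) ^ 2 + (γ.1 1 1) ^ 2 ≤ R ^ 2}

/-!
Distinct points of the orbit `Γ • I` are at distance at least `2r`, so the hyperbolic balls of
radius `r` around them are disjoint. Since `a² + b² + c² + d² = 2 cosh (d (γ • I, I))`, those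
counted lie in the ball of radius `Q + r` around `I`, and comparing areas bounds the number of
orbit points. Each of them comes from at most two elements `±γ`.

The area of a ball of radius `ρ` is `2π (cosh ρ - 1)`: it is the Euclidean disc of centre `i cosh ρ`
and radius `sinh ρ`, and integrating `1 / y²` along its vertical chords leaves the integral of
`2 √(sinh² ρ - x²) / (1 + x²)`.
-/

open MeasureTheory Metric Set
open UpperHalfPlane (I)
open scoped ENNReal Pointwise Real

section Packing

variable {X : Type*} [PseudoMetricSpace X] [MeasurableSpace X] [OpensMeasurableSpace X]
  {μ : Measure X} {P : Finset X} {x : X} {r Q : ℝ} {v : ℝ≥0∞}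

lemma card_mul_le_measure_ball_add (hsep : (P : Set X).Pairwise fun p q => 2 * r ≤ dist p q)
    (hball : ∀ p ∈ P, dist p x ≤ Q) (hv : ∀ p ∈ P, v ≤ μ (ball p r)) :
    P.card * v ≤ μ (ball x (Q + r)) := by
  have hdisj : (P : Set X).PairwiseDisjoint fun p => ball p r := fun p hp q hq hpq =>
    ball_disjoint_ball (by linarith [hsep hp hq hpq])
  calc P.card * v
      ≤ ∑ p ∈ P, μ (ball p r) := by
        simpa only [nsmul_eq_mul] using Finset.card_nsmul_le_sum P _ v hv
    _ = μ (⋃ p ∈ P, ball p r) := (measure_biUnion_finset hdisj fun _ _ => measurableSet_ball).symm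
    _ ≤ μ (ball x (Q + r)) := measure_mono <| iUnion₂_subset fun p hp =>
        ball_subset_ball' (by linarith [hball p hp])

end Packing

section Calculus

lemma hasDerivAt_arcsin_comp {u : ℝ → ℝ} {u' x q : ℝ} (hu : HasDerivAt u u' x) (hq : 0 < q)
    (h : 1 - u x ^ 2 = q ^ 2) : HasDerivAt (fun y => Real.arcsin (u y)) (u' / q) x := by
  have hne : u x ≠ -1 ∧ u x ≠ 1 := by
    constructor <;> intro hux <;> rw [hux] at h <;> nlinarith
  convert! (Real.hasDerivAt_arcsin hne.1 hne.2).comp x hu using 1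
  rw [h, Real.sqrt_sq hq.le]
  ring

lemma hasDerivAt_div_sqrt_one_add_sq (x : ℝ) :
    HasDerivAt (fun y : ℝ => y / √(1 + y ^ 2)) (1 / √(1 + x ^ 2) ^ 3) x := by
  have hpos : 0 < 1 + x ^ 2 := by positivity
  have hsqrt : HasDerivAt (fun y : ℝ => √(1 + y ^ 2)) (x / √(1 + x ^ 2)) x := by
    convert! ((hasDerivAt_pow 2 x).const_add 1).sqrt hpos.ne' using 1
    push_cast
    ring
  convert! (hasDerivAt_id' x).div hsqrt (Real.sqrt_pos.2 hpos).ne' using 1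
  field_simp
  rw [Real.sq_sqrt hpos.le]
  ring

/-- A primitive of `x ↦ 2 √(s² - x²) / (1 + x²)` on `(-s, s)`, obtained from the substitution
`x = s sin θ`. The usual `arctan (√(1 + s²) tan θ)` is written as an `arcsin` so that the primitive
is continuous up to the endpoints. -/
def semicirclePrimitive (s x : ℝ) : ℝ :=
  2 * (√(1 + s ^ 2) * Real.arcsin (√(1 + s ^ 2) / s * (x / √(1 + x ^ 2))) - Real.arcsin (x / s))

lemma continuous_semicirclePrimitive (s : ℝ) : Continuous (semicirclePrimitive s) := by
  have hquot : Continuous fun x : ℝ => x / √(1 + x ^ 2) :=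
    continuous_id.div₀ (by fun_prop) fun x => by positivity
  unfold semicirclePrimitive
  fun_prop

lemma hasDerivAt_semicirclePrimitive {s x : ℝ} (hx : x ∈ Ioo (-s) s) :
    HasDerivAt (semicirclePrimitive s) (2 * √(s ^ 2 - x ^ 2) / (1 + x ^ 2)) x := by
  have hs : 0 < s := by linarith [hx.1, hx.2]
  have hsx : 0 < s ^ 2 - x ^ 2 := by nlinarith [hx.1, hx.2]
  have hc_sq : √(1 + s ^ 2) ^ 2 = 1 + s ^ 2 := Real.sq_sqrt (by positivity)
  have ht_sq : √(1 + x ^ 2) ^ 2 = 1 + x ^ 2 := Real.sq_sqrt (by positivity)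
  have hw_sq : √(s ^ 2 - x ^ 2) ^ 2 = s ^ 2 - x ^ 2 := Real.sq_sqrt hsx.le
  have hinner := hasDerivAt_arcsin_comp (q := √(s ^ 2 - x ^ 2) / s)
    ((hasDerivAt_id' x).div_const s) (by positivity) (by rw [div_pow, div_pow, hw_sq]; field_simp)
  have houter := hasDerivAt_arcsin_comp (q := √(s ^ 2 - x ^ 2) / (s * √(1 + x ^ 2)))
    ((hasDerivAt_div_sqrt_one_add_sq x).const_mul (√(1 + s ^ 2) / s)) (by positivity) (by
      rw [mul_pow, div_pow, div_pow, div_pow, mul_pow, hw_sq, hc_sq, ht_sq]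
      field_simp
      ring)
  convert! ((houter.const_mul √(1 + s ^ 2)).sub hinner).const_mul 2 using 1
  field_simp
  rw [hw_sq, hc_sq, ht_sq]
  field_simp
  ring

lemma integral_semicircle_div_one_add_sq {s : ℝ} (hs : 0 ≤ s) :
    ∫ x in -s..s, 2 * √(s ^ 2 - x ^ 2) / (1 + x ^ 2) = 2 * π * (√(1 + s ^ 2) - 1) := by
  rcases hs.eq_or_lt with rfl | hs
  · simp
  have hint : IntervalIntegrable (fun x => 2 * √(s ^ 2 - x ^ 2) / (1 + x ^ 2)) volume (-s) s :=
    Continuous.intervalIntegrable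
      (Continuous.div₀ (by fun_prop) (by fun_prop) fun x => by positivity) _ _
  rw [intervalIntegral.integral_eq_sub_of_hasDerivAt_of_le (by linarith)
    (continuous_semicirclePrimitive s).continuousOn
    (fun x hx => hasDerivAt_semicirclePrimitive hx) hint]
  have hc : √(1 + s ^ 2) ≠ 0 := by positivity
  have hright : √(1 + s ^ 2) / s * (s / √(1 + s ^ 2)) = 1 := by field_simp
  have hleft : √(1 + s ^ 2) / s * -(s / √(1 + s ^ 2)) = -1 := by field_simp
  simp only [semicirclePrimitive, neg_sq, hright, hleft, neg_div, div_self hs.ne',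
    Real.arcsin_neg, Real.arcsin_one]
  ring

lemma lintegral_Ioo_inv_sq {a b : ℝ} (ha : 0 < a) (hab : a ≤ b) :
    ∫⁻ y in Ioo a b, ENNReal.ofReal (y ^ 2)⁻¹ = ENNReal.ofReal (a⁻¹ - b⁻¹) := by
  have hpos : ∀ y ∈ uIcc a b, 0 < y := fun y hy => ha.trans_le (uIcc_of_le hab ▸ hy).1
  have hint : IntervalIntegrable (fun y : ℝ => (y ^ 2)⁻¹) volume a b :=
    ContinuousOn.intervalIntegrable <|
      ContinuousOn.inv₀ (by fun_prop) fun y hy => pow_ne_zero 2 (hpos y hy).ne'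
  have hderiv : ∀ y ∈ uIcc a b, HasDerivAt (fun y : ℝ => -y⁻¹) (y ^ 2)⁻¹ y := fun y hy => by
    simpa using (hasDerivAt_inv (hpos y hy).ne').fun_neg
  rw [← ofReal_integral_eq_lintegral_ofReal
      ((intervalIntegrable_iff_integrableOn_Ioo_of_le hab).1 hint)
      (.of_forall fun y => by positivity),
    ← integral_Ioc_eq_integral_Ioo, ← intervalIntegral.integral_of_le hab,
    intervalIntegral.integral_eq_sub_of_hasDerivAt hderiv hint]
  ring_nf

end Calculus

section HyperbolicArea

lemma volume_setOf_mem_regionBetween {f g : ℝ → ℝ} {s : Set ℝ} (hf : Measurable f)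
    (hg : Measurable g) (hs : MeasurableSet s) (hf_pos : ∀ x ∈ s, 0 < f x)
    (hfg : ∀ x ∈ s, f x ≤ g x) :
    volume {z : ℍ | (z.re, z.im) ∈ regionBetween f g s} =
      ∫⁻ x in s, ENNReal.ofReal ((f x)⁻¹ - (g x)⁻¹) := by
  have himage : (↑) '' {z : ℍ | (z.re, z.im) ∈ regionBetween f g s} =
      Complex.measurableEquivRealProd ⁻¹' regionBetween f g s := by
    ext w
    constructor
    · rintro ⟨z, hz, rfl⟩
      exact hz
    · exact fun hw => ⟨⟨w, (hf_pos _ hw.1).trans hw.2.1⟩, hw, rfl⟩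
  have hdensity : Measurable fun p : ℝ × ℝ => ENNReal.ofReal (p.2 ^ 2)⁻¹ := by fun_prop
  have hregion := measurableSet_regionBetween hf hg hs
  calc volume {z : ℍ | (z.re, z.im) ∈ regionBetween f g s}
      = ∫⁻ w in Complex.measurableEquivRealProd ⁻¹' regionBetween f g s,
          ENNReal.ofReal ((Complex.measurableEquivRealProd w).2 ^ 2)⁻¹ := by
        rw [UpperHalfPlane.volume_eq_lintegral, himage]
        refine lintegral_congr fun w => ?_
        rw [← ENNReal.ofReal_coe_nnreal]
        simp
    _ = ∫⁻ p in regionBetween f g s, ENNReal.ofReal (p.2 ^ 2)⁻¹ :=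
        Complex.volume_preserving_equiv_real_prod.setLIntegral_comp_preimage hregion hdensity
    _ = ∫⁻ x, ∫⁻ y, (regionBetween f g s).indicator
          (fun p => ENNReal.ofReal (p.2 ^ 2)⁻¹) (x, y) := by
        rw [← lintegral_indicator hregion, Measure.volume_eq_prod,
          lintegral_prod _ (hdensity.indicator hregion).aemeasurable]
    _ = ∫⁻ x in s, ENNReal.ofReal ((f x)⁻¹ - (g x)⁻¹) := by
        rw [← lintegral_indicator hs]
        refine lintegral_congr fun x => ?_
        by_cases hx : x ∈ s
        · rw [indicator_of_mem hx, ← lintegral_Ioo_inv_sq (hf_pos x hx) (hfg x hx),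
            ← lintegral_indicator measurableSet_Ioo]
          simp [indicator, regionBetween, hx]
        · simp [indicator, regionBetween, hx]

lemma mem_ball_I_iff {ρ : ℝ} (hρ : 0 ≤ ρ) (z : ℍ) :
    z ∈ ball I ρ ↔ z.re ^ 2 + (z.im - Real.cosh ρ) ^ 2 < Real.sinh ρ ^ 2 := by
  rw [mem_ball, UpperHalfPlane.dist_lt_iff_dist_coe_center_lt, UpperHalfPlane.I_im, one_mul,
    ← sq_lt_sq₀ dist_nonneg (Real.sinh_nonneg_iff.2 hρ), Complex.dist_eq, Complex.sq_norm,
    Complex.normSq_apply]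
  simp [sq]

lemma ball_I_eq_setOf_mem_regionBetween {ρ : ℝ} (hρ : 0 ≤ ρ) :
    ball I ρ = {z : ℍ | (z.re, z.im) ∈ regionBetween
      (fun x => Real.cosh ρ - √(Real.sinh ρ ^ 2 - x ^ 2))
      (fun x => Real.cosh ρ + √(Real.sinh ρ ^ 2 - x ^ 2)) (Ioo (-Real.sinh ρ) (Real.sinh ρ))} := by
  ext z
  have him : z.im ∈ Ioo (Real.cosh ρ - √(Real.sinh ρ ^ 2 - z.re ^ 2))
        (Real.cosh ρ + √(Real.sinh ρ ^ 2 - z.re ^ 2)) ↔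
      z.re ^ 2 + (z.im - Real.cosh ρ) ^ 2 < Real.sinh ρ ^ 2 := by
    rw [← Real.ball_eq_Ioo, mem_ball, Real.dist_eq, Real.lt_sqrt (abs_nonneg _), sq_abs,
      lt_sub_iff_add_lt']
  simp only [mem_ball_I_iff hρ, regionBetween, mem_ofPred_eq, him, iff_and_self]
  intro hz
  exact abs_lt.1 <| abs_lt_of_sq_lt_sq (by nlinarith) (Real.sinh_nonneg_iff.2 hρ)

lemma sqrt_sinh_sq_sub_sq_lt_cosh (ρ x : ℝ) : √(Real.sinh ρ ^ 2 - x ^ 2) < Real.cosh ρ :=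
  (Real.sqrt_lt' (Real.cosh_pos ρ)).2 (by nlinarith [Real.cosh_sq' ρ])

lemma inv_cosh_sub_sqrt_sub_inv_cosh_add_sqrt {ρ x : ℝ} (hx : x ^ 2 ≤ Real.sinh ρ ^ 2) :
    (Real.cosh ρ - √(Real.sinh ρ ^ 2 - x ^ 2))⁻¹ - (Real.cosh ρ + √(Real.sinh ρ ^ 2 - x ^ 2))⁻¹ =
      2 * √(Real.sinh ρ ^ 2 - x ^ 2) / (1 + x ^ 2) := by
  have hprod : (Real.cosh ρ - √(Real.sinh ρ ^ 2 - x ^ 2)) *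
      (Real.cosh ρ + √(Real.sinh ρ ^ 2 - x ^ 2)) = 1 + x ^ 2 := by
    linarith [Real.sq_sqrt (sub_nonneg.2 hx), Real.cosh_sq' ρ]
  have hlower := sub_pos.2 (sqrt_sinh_sq_sub_sq_lt_cosh ρ x)
  have hupper : 0 < Real.cosh ρ + √(Real.sinh ρ ^ 2 - x ^ 2) := by positivity
  rw [inv_sub_inv hlower.ne' hupper.ne', hprod]
  ring

lemma volume_ball_I {ρ : ℝ} (hρ : 0 ≤ ρ) :
    volume (ball I ρ) = ENNReal.ofReal (2 * π * (Real.cosh ρ - 1)) := by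
  have hsinh : 0 ≤ Real.sinh ρ := Real.sinh_nonneg_iff.2 hρ
  have hint : IntegrableOn (fun x => 2 * √(Real.sinh ρ ^ 2 - x ^ 2) / (1 + x ^ 2))
      (Ioo (-Real.sinh ρ) (Real.sinh ρ)) :=
    (Continuous.integrableOn_Icc (Continuous.div₀ (by fun_prop) (by fun_prop)
      fun x => by positivity)).mono_set Ioo_subset_Icc_self
  calc volume (ball I ρ)
      = ∫⁻ x in Ioo (-Real.sinh ρ) (Real.sinh ρ), ENNReal.ofReal
          ((Real.cosh ρ - √(Real.sinh ρ ^ 2 - x ^ 2))⁻¹ -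
            (Real.cosh ρ + √(Real.sinh ρ ^ 2 - x ^ 2))⁻¹) := by
        rw [ball_I_eq_setOf_mem_regionBetween hρ]
        exact volume_setOf_mem_regionBetween (by fun_prop) (by fun_prop) measurableSet_Ioo
          (fun x _ => sub_pos.2 (sqrt_sinh_sq_sub_sq_lt_cosh ρ x))
          (fun x _ => by linarith [Real.sqrt_nonneg (Real.sinh ρ ^ 2 - x ^ 2)])
    _ = ∫⁻ x in Ioo (-Real.sinh ρ) (Real.sinh ρ),
          ENNReal.ofReal (2 * √(Real.sinh ρ ^ 2 - x ^ 2) / (1 + x ^ 2)) :=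
        setLIntegral_congr_fun measurableSet_Ioo fun x hx => by
          rw [inv_cosh_sub_sqrt_sub_inv_cosh_add_sqrt (sq_le_sq' hx.1.le hx.2.le)]
    _ = ENNReal.ofReal
          (∫ x in -Real.sinh ρ..Real.sinh ρ, 2 * √(Real.sinh ρ ^ 2 - x ^ 2) / (1 + x ^ 2)) := by
        rw [← ofReal_integral_eq_lintegral_ofReal hint (.of_forall fun x => by positivity),
          ← integral_Ioc_eq_integral_Ioo, ← intervalIntegral.integral_of_le (by linarith)]
    _ = ENNReal.ofReal (2 * π * (Real.cosh ρ - 1)) := by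
        rw [integral_semicircle_div_one_add_sq hsinh, ← Real.cosh_sq',
          Real.sqrt_sq (Real.cosh_pos ρ).le]

lemma volume_hyperbolic_ball (z : ℍ) {ρ : ℝ} (hρ : 0 ≤ ρ) :
    volume (ball z ρ) = ENNReal.ofReal (2 * π * (Real.cosh ρ - 1)) := by
  obtain ⟨g, rfl⟩ := MulAction.exists_smul_eq SL(2, ℝ) I z
  rw [← volume_ball_I hρ, ← Metric.smul_ball]
  exact measure_smul volume (Matrix.SpecialLinearGroup.mapGL ℝ g) (ball I ρ)

lemma card_le_of_pairwise_two_mul_le_dist {P : Finset ℍ} {z : ℍ} {r Q : ℝ} (hr : 0 < r)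
    (hQ : 0 ≤ Q) (hsep : (P : Set ℍ).Pairwise fun p q => 2 * r ≤ dist p q)
    (hball : ∀ p ∈ P, dist p z ≤ Q) :
    (P.card : ℝ) ≤ (Real.cosh (Q + r) - 1) / (Real.cosh r - 1) := by
  have hcosh_r : 0 < Real.cosh r - 1 := sub_pos.2 (Real.one_lt_cosh.2 hr.ne')
  have hcosh_Qr : 0 ≤ Real.cosh (Q + r) - 1 := sub_nonneg.2 (Real.one_le_cosh _)
  have hvol := card_mul_le_measure_ball_add (μ := volume) hsep hball
    fun p _ => (volume_hyperbolic_ball p hr.le).ge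
  rw [volume_hyperbolic_ball z (by positivity), ← ENNReal.ofReal_natCast,
    ← ENNReal.ofReal_mul (by positivity), ENNReal.ofReal_le_ofReal_iff (by positivity),
    mul_left_comm] at hvol
  exact (le_div_iff₀ hcosh_r).2 (le_of_mul_le_mul_left hvol Real.two_pi_pos)

end HyperbolicArea

lemma finite_and_ncard_le_of_forall_finset {α : Type*} {s : Set α} {C : ℝ}
    (h : ∀ T : Finset α, (T : Set α) ⊆ s → (T.card : ℝ) ≤ C) : s.Finite ∧ (s.ncard : ℝ) ≤ C := by
  have hfin : s.Finite := by
    by_contra hinf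
    obtain ⟨n, hn⟩ := exists_nat_gt C
    obtain ⟨T, hT, rfl⟩ := Set.Infinite.exists_subset_card_eq hinf n
    exact hn.not_ge (h T hT)
  refine ⟨hfin, ?_⟩
  rw [ncard_eq_toFinset_card s hfin]
  exact h _ hfin.coe_toFinset.subset

section OrbitCounting

variable {Γ : Subgroup SL(2, ℝ)} {z : ℍ} {r : ℝ}

lemma neg_smul_upperHalfPlane {R : Type*} [CommRing R] [Algebra R ℝ] (γ : SL(2, R)) (z : ℍ) :
    -γ • z = γ • z := by
  ext
  simp [UpperHalfPlane.coe_specialLinearGroup_apply, ← neg_add, -neg_add_rev]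

lemma le_dist_smul_smul (hΓ : ∀ γ ∈ Γ, γ ≠ 1 → γ ≠ -1 → 2 * r ≤ dist z (γ • z))
    {γ δ : SL(2, ℝ)} (hγ : γ ∈ Γ) (hδ : δ ∈ Γ) (hne : δ ≠ γ) (hne_neg : δ ≠ -γ) :
    2 * r ≤ dist (γ • z) (δ • z) := by
  have hdist := hΓ (γ⁻¹ * δ) (Γ.mul_mem (Γ.inv_mem hγ) hδ)
    (fun h => hne (inv_mul_eq_one.1 h).symm)
    (fun h => hne_neg (by simpa using inv_mul_eq_iff_eq_mul.1 h))
  rwa [← dist_smul γ, smul_smul, mul_inv_cancel_left] at hdist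

lemma pairwise_two_mul_le_dist_orbit (hΓ : ∀ γ ∈ Γ, γ ≠ 1 → γ ≠ -1 → 2 * r ≤ dist z (γ • z)) :
    ((fun γ : SL(2, ℝ) => γ • z) '' Γ).Pairwise fun p q => 2 * r ≤ dist p q := by
  rintro _ ⟨γ, hγ, rfl⟩ _ ⟨δ, hδ, rfl⟩ hne
  refine le_dist_smul_smul hΓ hγ hδ (fun h => hne (by rw [h])) fun h => hne ?_
  simp only [h, neg_smul_upperHalfPlane]

lemma card_le_two_mul_card_image_smul [DecidableEq ℍ] (hr : 0 < r)
    (hΓ : ∀ γ ∈ Γ, γ ≠ 1 → γ ≠ -1 → 2 * r ≤ dist z (γ • z))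
    {T : Finset SL(2, ℝ)} (hT : ∀ γ ∈ T, γ ∈ Γ) :
    T.card ≤ 2 * (T.image fun γ => γ • z).card := by
  classical
  refine Finset.card_le_mul_card_image T 2 fun p hp => ?_
  obtain ⟨γ, hγ, rfl⟩ := Finset.mem_image.1 hp
  suffices hfibre : {δ ∈ T | δ • z = γ • z} ⊆ {γ, -γ} from
    (Finset.card_le_card hfibre).trans Finset.card_le_two
  intro δ hδ
  obtain ⟨hδT, hδz⟩ := Finset.mem_filter.1 hδ
  by_contra hne
  simp only [Finset.mem_insert, Finset.mem_singleton, not_or] at hne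
  have hdist := le_dist_smul_smul hΓ (hT γ hγ) (hT δ hδT) hne.1 hne.2
  rw [hδz, dist_self] at hdist
  linarith

theorem finite_and_ncard_setOf_dist_smul_le {Q : ℝ} (hr : 0 < r) (hQ : 0 ≤ Q)
    (hΓ : ∀ γ ∈ Γ, γ ≠ 1 → γ ≠ -1 → 2 * r ≤ dist z (γ • z)) :
    {γ : SL(2, ℝ) | γ ∈ Γ ∧ dist (γ • z) z ≤ Q}.Finite ∧
      ({γ : SL(2, ℝ) | γ ∈ Γ ∧ dist (γ • z) z ≤ Q}.ncard : ℝ) ≤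
        2 * (Real.cosh (Q + r) - 1) / (Real.cosh r - 1) := by
  classical
  refine finite_and_ncard_le_of_forall_finset fun T hT => ?_
  have hsep : ((T.image fun γ => γ • z : Finset ℍ) : Set ℍ).Pairwise
      fun p q => 2 * r ≤ dist p q := by
    rw [Finset.coe_image]
    exact (pairwise_two_mul_le_dist_orbit hΓ).mono (image_mono fun γ hγ => (hT hγ).1)
  calc (T.card : ℝ)
      ≤ 2 * (T.image fun γ => γ • z).card := by
        exact_mod_cast card_le_two_mul_card_image_smul hr hΓ fun γ hγ => (hT hγ).1
    _ ≤ 2 * ((Real.cosh (Q + r) - 1) / (Real.cosh r - 1)) := by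
        gcongr
        exact card_le_of_pairwise_two_mul_le_dist hr hQ hsep
          (Finset.forall_mem_image.2 fun γ hγ => (hT hγ).2)
    _ = 2 * (Real.cosh (Q + r) - 1) / (Real.cosh r - 1) := (mul_div_assoc _ _ _).symm

end OrbitCounting

section HilbertSchmidtNorm

lemma mul_sub_mul_eq_one {R : Type*} [CommRing R] (γ : SL(2, R)) :
    γ.1 0 0 * γ.1 1 1 - γ.1 0 1 * γ.1 1 0 = 1 := by
  rw [← Matrix.det_fin_two, γ.2]

lemma re_smul_I (γ : SL(2, ℝ)) : (γ • I).re =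
    (γ.1 0 0 * γ.1 1 0 + γ.1 0 1 * γ.1 1 1) / (γ.1 1 0 ^ 2 + γ.1 1 1 ^ 2) := by
  rw [← UpperHalfPlane.coe_re, UpperHalfPlane.coe_specialLinearGroup_apply]
  simp only [Algebra.algebraMap_self, RingHom.id_apply, UpperHalfPlane.coe_I, Complex.div_re,
    Complex.add_re, Complex.mul_re, Complex.ofReal_re, Complex.I_re, Complex.ofReal_im,
    Complex.I_im, Complex.normSq_apply, Complex.add_im, Complex.mul_im]
  ring

lemma im_smul_I (γ : SL(2, ℝ)) : (γ • I).im = 1 / (γ.1 1 0 ^ 2 + γ.1 1 1 ^ 2) := by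
  have him : (γ • I).im = (γ.1 0 0 * γ.1 1 1 - γ.1 0 1 * γ.1 1 0) /
      (γ.1 1 0 ^ 2 + γ.1 1 1 ^ 2) := by
    rw [← UpperHalfPlane.coe_im, UpperHalfPlane.coe_specialLinearGroup_apply]
    simp only [Algebra.algebraMap_self, RingHom.id_apply, UpperHalfPlane.coe_I, Complex.div_im,
      Complex.add_im, Complex.mul_im, Complex.ofReal_re, Complex.I_im, Complex.ofReal_im,
      Complex.I_re, Complex.add_re, Complex.mul_re, Complex.normSq_apply]
    ring
  rwa [mul_sub_mul_eq_one] at him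

lemma cosh_dist_smul_I (γ : SL(2, ℝ)) : Real.cosh (dist (γ • I) I) =
    (γ.1 0 0 ^ 2 + γ.1 0 1 ^ 2 + γ.1 1 0 ^ 2 + γ.1 1 1 ^ 2) / 2 := by
  have hrow : 0 < γ.1 1 0 ^ 2 + γ.1 1 1 ^ 2 := by
    simpa only [im_smul_I, one_div, inv_pos] using (γ • I).im_pos
  rw [UpperHalfPlane.cosh_dist', re_smul_I, im_smul_I, UpperHalfPlane.I_re, UpperHalfPlane.I_im]
  field_simp
  linear_combination (-1 - (γ.1 0 0 * γ.1 1 1 - γ.1 0 1 * γ.1 1 0)) * mul_sub_mul_eq_one γ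

lemma latticeBall_eq_setOf_dist_smul_I_le (Γ : Subgroup SL(2, ℝ)) {R : ℝ} (hR : 1 ≤ R ^ 2 / 2) :
    latticeBall Γ R = {γ | γ ∈ Γ ∧ dist (γ • I) I ≤ Real.arcosh (R ^ 2 / 2)} := by
  ext γ
  rw [latticeBall, mem_ofPred_eq, mem_ofPred_eq,
    ← abs_of_nonneg (dist_nonneg (x := γ • I) (y := I)),
    ← abs_of_nonneg (Real.arcosh_nonneg hR), ← Real.cosh_le_cosh, Real.cosh_arcosh hR,
    cosh_dist_smul_I, div_le_div_iff_of_pos_right two_pos]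

lemma arcosh_eq_real_arcosh (x : ℝ) : arcosh x = Real.arcosh x := rfl

end HilbertSchmidtNorm

/-- Let `Γ ≤ SL(2,ℝ)` and `r > 0` be such that `d(i, γ·i) ≥ 2r` for all `γ ∈ Γ` with
`γ ≠ I, −I`.  Then for every `R ≥ √2`, the set of `γ ∈ Γ` with
`a² + b² + c² + d² ≤ R²` is finite of cardinality at most
`2·(cosh(Q + r) − 1)/(cosh r − 1)`, where `Q = arcosh(R²/2)`. -/
theorem lattice_count_uniform (Γ : Subgroup SL(2, ℝ)) (r : ℝ) (hr : 0 < r)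
    (h : ∀ γ ∈ Γ, (γ : Matrix (Fin 2) (Fin 2) ℝ) ≠ 1 →
      (γ : Matrix (Fin 2) (Fin 2) ℝ) ≠ -1 →
      2 * r ≤ dist UpperHalfPlane.I (γ • UpperHalfPlane.I))
    (R : ℝ) (hR : Real.sqrt 2 ≤ R) :
    (latticeBall Γ R).Finite ∧
      ((latticeBall Γ R).ncard : ℝ) ≤
        2 * (Real.cosh (arcosh (R ^ 2 / 2) + r) - 1) / (Real.cosh r - 1) := by
  have hR_sq : 1 ≤ R ^ 2 / 2 := by linarith [(Real.sqrt_le_iff.1 hR).2]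
  have hΓ : ∀ γ ∈ Γ, γ ≠ 1 → γ ≠ -1 → 2 * r ≤ dist I (γ • I) := fun γ hγ hne hne_neg =>
    h γ hγ (fun heq => hne (Subtype.ext heq))
      (fun heq => hne_neg (Subtype.ext (by simpa using heq)))
  rw [latticeBall_eq_setOf_dist_smul_I_le Γ hR_sq, arcosh_eq_real_arcosh]
  exact finite_and_ncard_setOf_dist_smul_le hr (Real.arcosh_nonneg hR_sq) hΓ

end
end
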